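/- Let R be a commutative Noetherian ring, 𝔞 a proper ideal of R, t ≥ 0 an integer, and M an R-module such that Ext^i_R(R/𝔞, M) is a finitely generated R-module for every i ≥ 0. If H^i_𝔞(M) belongs to FD_{≤1} for every integer 0 ≤ i < t (in particular, if dim_R H^i_𝔞(M) ≤ 1 for all i < t, or if dim R = 2), then H^i_𝔞(M) is 𝔞-cofinite for every 0 ≤ i < t and the R-modules Hom_R(R/𝔞, H^t_𝔞(M)) and Ext^1_R(R/𝔞, H^t_𝔞(M)) are finitely generated. -/

import Mathlib

open CategoryTheory

universe u

/-- The `R`-module `Ext^i_R(N, M)` for two `R`-modules (objects of `ModuleCat R`). -/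
noncomputable def extObj {R : Type u} [CommRing R] (N M : ModuleCat.{u} R) (i : ℕ) :
    ModuleCat.{u} R :=
  ((Ext R (ModuleCat.{u} R) i).obj (Opposite.op N)).obj M

/-- The `R`-module `Ext^i_R(R/𝔞, M)`. -/
noncomputable def extIdeal {R : Type u} [CommRing R] (𝔞 : Ideal R) (i : ℕ)
    (M : ModuleCat.{u} R) : ModuleCat.{u} R :=
  extObj (ModuleCat.of R (R ⧸ 𝔞)) M i

/-- An `R`-module `M` is `𝔞`-cofinite if `Supp_R M ⊆ V(𝔞)` and `Ext^i_R(R/𝔞, M)` is a finitely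
generated `R`-module for every `i ≥ 0`. -/
def IsCofinite {R : Type u} [CommRing R] (𝔞 : Ideal R) (M : ModuleCat.{u} R) : Prop :=
  Module.support R M ⊆ PrimeSpectrum.zeroLocus (𝔞 : Set R) ∧
    ∀ i : ℕ, Module.Finite R (extIdeal 𝔞 i M)

/-- The Krull dimension `dim_R M` of an `R`-module `M`: the Krull dimension of its support,
i.e. the supremum of `dim R/𝔭` over primes `𝔭` in the support of `M`. -/
noncomputable def moduleDim (R : Type u) [CommRing R] (M : Type u) [AddCommGroup M]
    [Module R M] : WithBot ℕ∞ :=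
  Order.krullDim (Module.support R M)

/-- An `R`-module `M` is in `FD_{≤n}` if there is a finitely generated submodule `N ⊆ M`
with `dim_R (M/N) ≤ n`. -/
def MemFD (R : Type u) [CommRing R] (n : ℕ) (M : Type u) [AddCommGroup M] [Module R M] : Prop :=
  ∃ N : Submodule R M, N.FG ∧ moduleDim R (M ⧸ N) ≤ (n : WithBot ℕ∞)

/-- An `R`-module `M` is `𝔞`-torsion if every element is annihilated by some power of `𝔞`. -/
def IsTorsionIdeal {R : Type u} [CommRing R] (𝔞 : Ideal R) (M : Type u) [AddCommGroup M]
    [Module R M] : Prop :=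
  ∀ m : M, ∃ n : ℕ, ∀ a ∈ 𝔞 ^ n, a • m = 0

/-- The arithmetic rank of an ideal `𝔞`: the least `n` such that there exist `a₁, …, aₙ ∈ R`
with `Rad (a₁, …, aₙ) = Rad 𝔞`. -/
noncomputable def arithRank {R : Type u} [CommRing R] (𝔞 : Ideal R) : ℕ :=
  sInf {n : ℕ | ∃ f : Fin n → R, (Ideal.span (Set.range f)).radical = 𝔞.radical}

namespace CategoryTheory.ProjectiveResolution

variable {R : Type u} [CommRing R] {X Y : ModuleCat.{u} R}

open Abelian

lemma extMk_eq_zero_iff_eq_zero (P : ProjectiveResolution X) (f : P.complex.X 0 ⟶ Y)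
    (m : ℕ) (hm : 0 + 1 = m)
    (hf : P.complex.d m 0 ≫ f = 0) : P.extMk f m hm hf = 0 ↔ f = 0 := by
  simp only [← P.extEquivCohomologyClass.apply_eq_iff_eq,
    extEquivCohomologyClass_extMk, extEquivCohomologyClass_zero,
    CochainComplex.HomComplex.CohomologyClass.mk_eq_zero_iff]
  rw [CochainComplex.HomComplex.Cocycle.toSingleMk_mem_coboundaries_iff _ _ _ _ _ 1 (by simp)]
  constructor
  · rintro ⟨g, hg⟩
    have h0 : P.cochainComplex.d (-((0 : ℕ) : ℤ)) 1 = 0 :=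
      (P.cochainComplex.isZero_of_isStrictlyLE 0 1 (by simp)).eq_of_tgt _ _
    rw [h0, Limits.zero_comp] at hg
    rw [← cancel_epi (P.cochainComplexXIso (-((0 : ℕ) : ℤ)) 0 rfl).hom, ← hg, Limits.comp_zero]
  · rintro rfl
    exact ⟨0, by simp⟩

lemma smul_extMk (P : ProjectiveResolution X) {n : ℕ} (r : R) (f : P.complex.X n ⟶ Y)
    (m : ℕ) (hm : n + 1 = m)
    (hf : P.complex.d m n ≫ f = 0) :
    r • P.extMk f m hm hf = P.extMk (r • f) m hm (by simp [hf]) := by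
  rw [Ext.smul_eq_comp_mk₀, extMk_comp_mk₀]
  congr 1

variable (Y) in
/-- The morphism underlying a cocycle of the complex of homomorphisms into `Y`. -/
noncomputable def cocycleHom (P : ProjectiveResolution X) (n : ℕ) :
    (P.complex.linearYonedaObj R Y).cycles n →ₗ[R] (P.complex.X n ⟶ Y) :=
  ((P.complex.linearYonedaObj R Y).iCycles n).hom

lemma d_comp_cocycleHom (P : ProjectiveResolution X) (n : ℕ)
    (z : (P.complex.linearYonedaObj R Y).cycles n) :
    P.complex.d (n + 1) n ≫ P.cocycleHom Y n z = 0 :=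
  ConcreteCategory.congr_hom ((P.complex.linearYonedaObj R Y).iCycles_d n (n + 1)) z

lemma cocycleHom_injective (P : ProjectiveResolution X) (n : ℕ) :
    Function.Injective (P.cocycleHom Y n) :=
  (ModuleCat.mono_iff_injective ((P.complex.linearYonedaObj R Y).iCycles n)).1 inferInstance

lemma exists_cocycleHom_eq (P : ProjectiveResolution X) (n : ℕ) (f : P.complex.X n ⟶ Y)
    (hf : P.complex.d (n + 1) n ≫ f = 0) : ∃ z, P.cocycleHom Y n z = f := by
  let k : ModuleCat.of R R ⟶ (P.complex.linearYonedaObj R Y).X n :=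
    ModuleCat.ofHom (LinearMap.toSpanSingleton R _ f)
  have hk : k ≫ (P.complex.linearYonedaObj R Y).d n (n + 1) = 0 := by
    ext
    change P.complex.d (n + 1) n ≫ ((1 : R) • f) = 0
    simp [hf]
  refine ⟨((P.complex.linearYonedaObj R Y).liftCycles k (n + 1) (by simp) hk).hom 1, ?_⟩
  have h2 := ConcreteCategory.congr_hom
    ((P.complex.linearYonedaObj R Y).liftCycles_i k (n + 1) (by simp) hk) (1 : R)
  exact h2.trans (one_smul R f)

variable (Y) in
/-- The `Ext` class of a cocycle. -/
noncomputable def cyclesToExt (P : ProjectiveResolution X) (n : ℕ) :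
    (P.complex.linearYonedaObj R Y).cycles n →ₗ[R] Abelian.Ext X Y n where
  toFun z := P.extMk (P.cocycleHom Y n z) (n + 1) rfl (P.d_comp_cocycleHom n z)
  map_add' z w := by
    rw [add_extMk]
    congr 1
    exact map_add _ z w
  map_smul' r z := by
    rw [RingHom.id_apply, smul_extMk]
    congr 1
    exact map_smul _ r z

lemma cyclesToExt_apply (P : ProjectiveResolution X) (n : ℕ)
    (z : (P.complex.linearYonedaObj R Y).cycles n) :
    P.cyclesToExt Y n z = P.extMk (P.cocycleHom Y n z) (n + 1) rfl (P.d_comp_cocycleHom n z) := rfl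

lemma cyclesToExt_surjective (P : ProjectiveResolution X) (n : ℕ) :
    Function.Surjective (P.cyclesToExt Y n) := by
  intro α
  obtain ⟨f, hf, rfl⟩ := P.extMk_surjective α (n + 1) rfl
  obtain ⟨z, rfl⟩ := P.exists_cocycleHom_eq n f hf
  exact ⟨z, rfl⟩

lemma ker_cyclesToExt (P : ProjectiveResolution X) (n : ℕ) :
    LinearMap.ker (P.cyclesToExt Y n) =
      LinearMap.ker ((P.complex.linearYonedaObj R Y).homologyπ n).hom := by
  ext z
  rw [LinearMap.mem_ker, LinearMap.mem_ker, cyclesToExt_apply]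
  obtain _ | n := n
  · rw [extMk_eq_zero_iff_eq_zero]
    constructor
    · intro h
      rw [P.cocycleHom_injective 0 (h.trans (map_zero _).symm), map_zero]
    · intro h
      have hm : Mono ((P.complex.linearYonedaObj R Y).homologyπ 0) := by
        have := (P.complex.linearYonedaObj R Y).isIso_homologyπ 0 0 (by simp)
          (HomologicalComplex.shape _ _ _ (by simp))
        infer_instance
      rw [(ModuleCat.mono_iff_injective _).1 hm (h.trans (map_zero _).symm), map_zero]
  · rw [P.extMk_eq_zero_iff _ _ _ _ n rfl]
    have hex : Function.Exact ((P.complex.linearYonedaObj R Y).toCycles n (n + 1)).hom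
        ((P.complex.linearYonedaObj R Y).homologyπ (n + 1)).hom := by
      have := ShortComplex.exact_of_g_is_cokernel (ShortComplex.mk _ _
        ((P.complex.linearYonedaObj R Y).toCycles_comp_homologyπ n (n + 1)))
        ((P.complex.linearYonedaObj R Y).homologyIsCokernel n (n + 1) (by simp))
      exact (ShortComplex.ShortExact.moduleCat_exact_iff_function_exact _).1 this
    refine Iff.trans ?_ (hex z).symm
    have key (g : P.complex.X n ⟶ Y) :
        P.cocycleHom Y (n + 1) (((P.complex.linearYonedaObj R Y).toCycles n (n + 1)).hom g) =
          P.complex.d (n + 1) n ≫ g :=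
      ConcreteCategory.congr_hom ((P.complex.linearYonedaObj R Y).toCycles_i n (n + 1)) g
    constructor
    · rintro ⟨g, hg⟩
      exact ⟨g, P.cocycleHom_injective _ ((key g).trans hg)⟩
    · rintro ⟨g, rfl⟩
      exact ⟨g, (key g).symm⟩

/-- The comparison of `Ext` computed by a projective resolution with `Ext` in the derived
category. -/
noncomputable def homologyEquivExt (P : ProjectiveResolution X) (Y : ModuleCat.{u} R) (n : ℕ) :
    (P.complex.linearYonedaObj R Y).homology n ≃ₗ[R] Abelian.Ext X Y n :=
  have h : Function.Surjective ((P.complex.linearYonedaObj R Y).homologyπ n).hom :=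
    (ModuleCat.epi_iff_surjective _).1 inferInstance
  (((P.complex.linearYonedaObj R Y).homologyπ n).hom.quotKerEquivOfSurjective h).symm ≪≫ₗ
    Submodule.quotEquivOfEq _ _ (P.ker_cyclesToExt n).symm ≪≫ₗ
    (P.cyclesToExt Y n).quotKerEquivOfSurjective (P.cyclesToExt_surjective n)

lemma homologyEquivExt_homologyπ (P : ProjectiveResolution X) (Y : ModuleCat.{u} R) (n : ℕ)
    (z : (P.complex.linearYonedaObj R Y).cycles n) :
    P.homologyEquivExt Y n (((P.complex.linearYonedaObj R Y).homologyπ n).hom z) =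
      P.cyclesToExt Y n z := by
  have h : Function.Surjective ((P.complex.linearYonedaObj R Y).homologyπ n).hom :=
    (ModuleCat.epi_iff_surjective _).1 inferInstance
  have : (((P.complex.linearYonedaObj R Y).homologyπ n).hom.quotKerEquivOfSurjective h).symm
      (((P.complex.linearYonedaObj R Y).homologyπ n).hom z) = Submodule.Quotient.mk z := by
    rw [LinearEquiv.symm_apply_eq]; rfl
  simp only [homologyEquivExt, LinearEquiv.trans_apply]
  erw [this]
  rfl

/-- The morphism of complexes of homomorphisms induced by a morphism of resolutions. -/
noncomputable def linearYonedaObjMap {X' : ModuleCat.{u} R} {P' : ProjectiveResolution X'}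
    {P : ProjectiveResolution X} (φ : P'.complex ⟶ P.complex) (Y : ModuleCat.{u} R) :
    P.complex.linearYonedaObj R Y ⟶ P'.complex.linearYonedaObj R Y :=
  (HomologicalComplex.unopFunctor (ModuleCat.{u} R) _).map
    ((((linearYoneda R (ModuleCat.{u} R)).obj Y).rightOp.mapHomologicalComplex _).map φ).op

lemma cocycleHom_cyclesMap {X' : ModuleCat.{u} R} {P' : ProjectiveResolution X'}
    {P : ProjectiveResolution X} (φ : P'.complex ⟶ P.complex) (Y : ModuleCat.{u} R) (n : ℕ)
    (z : (P.complex.linearYonedaObj R Y).cycles n) :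
    P'.cocycleHom Y n ((HomologicalComplex.cyclesMap (linearYonedaObjMap φ Y) n).hom z) =
      φ.f n ≫ P.cocycleHom Y n z :=
  ConcreteCategory.congr_hom (HomologicalComplex.cyclesMap_i (linearYonedaObjMap φ Y) n) z

lemma comp_inv_naturality {C : Type*} [Category* C] {A A' B B' D D' : C} (a : A ≅ B) (a' : A' ≅ B')
    (b : D ≅ A) (b' : D' ≅ A') {f : A' ⟶ A} {g : B' ⟶ B} {k : D' ⟶ D}
    (h : f ≫ a.hom = a'.hom ≫ g) (h' : b'.inv ≫ k = f ≫ b.inv) :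
    (a'.inv ≫ b'.inv) ≫ k = g ≫ a.inv ≫ b.inv := by
  rw [Category.assoc, h', ← Category.assoc, ← Category.assoc, (Iso.inv_comp_eq a').2
    ((Iso.eq_comp_inv a).2 h |>.trans (Category.assoc _ _ _))]

lemma isoExt_hom_naturality {X' : ModuleCat.{u} R} (g : X' ⟶ X) {P' : ProjectiveResolution X'}
    {P : ProjectiveResolution X} (φ : P'.complex ⟶ P.complex)
    (comm : φ.f 0 ≫ P.π.f 0 = P'.π.f 0 ≫ g) (Y : ModuleCat.{u} R) (n : ℕ) :
    ((Ext R (ModuleCat.{u} R) n).map g.op).app Y ≫ (P'.isoExt n Y).hom =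
      (P.isoExt n Y).hom ≫ HomologicalComplex.homologyMap (linearYonedaObjMap φ Y) n := by
  have h1 := isoLeftDerivedObj_inv_naturality g P' P φ comm
    (((linearYoneda R (ModuleCat.{u} R)).obj Y).rightOp) n
  have h2 := HomologicalComplex.homologyOp_hom_naturality (linearYonedaObjMap φ Y) n
  exact congrArg Quiver.Hom.unop (comp_inv_naturality
    (HomologicalComplex.homologyOp (P.complex.linearYonedaObj R Y) n)
    (HomologicalComplex.homologyOp (P'.complex.linearYonedaObj R Y) n)
    (P.isoLeftDerivedObj (((linearYoneda R (ModuleCat.{u} R)).obj Y).rightOp) n)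
    (P'.isoLeftDerivedObj (((linearYoneda R (ModuleCat.{u} R)).obj Y).rightOp) n) h2 h1)

lemma homologyEquivExt_homologyMap {X' : ModuleCat.{u} R} (g : X' ⟶ X)
    {P' : ProjectiveResolution X'} {P : ProjectiveResolution X} (φ : Hom P' P g)
    (Y : ModuleCat.{u} R) (n : ℕ) (x : (P.complex.linearYonedaObj R Y).homology n) :
    P'.homologyEquivExt Y n
        ((HomologicalComplex.homologyMap (linearYonedaObjMap φ.hom Y) n).hom x) =
      (Abelian.Ext.mk₀ g).comp (P.homologyEquivExt Y n x) (zero_add n) := by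
  have h : Function.Surjective ((P.complex.linearYonedaObj R Y).homologyπ n).hom :=
    (ModuleCat.epi_iff_surjective _).1 inferInstance
  obtain ⟨z, rfl⟩ := h x
  have h1 := ConcreteCategory.congr_hom
    (HomologicalComplex.homologyπ_naturality (linearYonedaObjMap φ.hom Y) n) z
  refine (congrArg (P'.homologyEquivExt Y n) h1).trans ?_
  refine (P'.homologyEquivExt_homologyπ Y n _).trans ?_
  rw [homologyEquivExt_homologyπ, cyclesToExt_apply, cyclesToExt_apply,
    mk₀_comp_extMk _ _ _ _ φ]
  congr 1
  exact cocycleHom_cyclesMap φ.hom Y n z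

end CategoryTheory.ProjectiveResolution

section Comparison

open Abelian

variable {R : Type u} [CommRing R]

/-- The left-derived `Ext` agrees with `Ext` in the derived category. -/
noncomputable def extObjEquiv (X Y : ModuleCat.{u} R) (n : ℕ) :
    extObj X Y n ≃ₗ[R] Abelian.Ext X Y n :=
  ((projectiveResolution X).isoExt n Y).toLinearEquiv ≪≫ₗ
    (projectiveResolution X).homologyEquivExt Y n

/-- The map on `Ext` induced by a morphism in the first variable. -/
noncomputable def extObjMap {X X' : ModuleCat.{u} R} (g : X' ⟶ X) (Y : ModuleCat.{u} R) (n : ℕ) :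
    extObj X Y n →ₗ[R] extObj X' Y n :=
  (((Ext R (ModuleCat.{u} R) n).map g.op).app Y).hom

lemma extObjEquiv_map {X X' : ModuleCat.{u} R} (g : X' ⟶ X) (Y : ModuleCat.{u} R) (n : ℕ)
    (x : extObj X Y n) :
    extObjEquiv X' Y n (extObjMap g Y n x) =
      (Abelian.Ext.mk₀ g).comp (extObjEquiv X Y n x) (zero_add n) := by
  let φ : ProjectiveResolution.Hom (projectiveResolution X') (projectiveResolution X) g :=
    ⟨ProjectiveResolution.lift g _ _,
      (ProjectiveResolution.lift_commutes_zero g _ _).trans (by simp)⟩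
  have h1 := ConcreteCategory.congr_hom (ProjectiveResolution.isoExt_hom_naturality g φ.hom
    (ProjectiveResolution.lift_commutes_zero g _ _) Y n) x
  exact (congrArg ((projectiveResolution X').homologyEquivExt Y n) h1).trans
    (ProjectiveResolution.homologyEquivExt_homologyMap g φ Y n _)

end Comparison

namespace localCohomology

open Abelian Opposite Limits

variable {R : Type u} [CommRing R]

/-- The projection `R/𝔞ⁿ ⟶ R/𝔞ᵐ` for `m ≤ n`. -/
noncomputable def quotPowMap (𝔞 : Ideal R) {m n : ℕ} (h : m ≤ n) :
    ModuleCat.of R (R ⧸ 𝔞 ^ n) ⟶ ModuleCat.of R (R ⧸ 𝔞 ^ m) :=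
  ModuleCat.ofHom (Submodule.mapQ _ _ LinearMap.id (Ideal.pow_le_pow_right h))

@[simp]
lemma quotPowMap_self (𝔞 : Ideal R) (n : ℕ) : quotPowMap 𝔞 (le_refl n) = 𝟙 _ := by
  apply ModuleCat.hom_ext
  apply LinearMap.ext
  intro x
  obtain ⟨x, rfl⟩ := Submodule.Quotient.mk_surjective _ x
  rfl

@[simp]
lemma quotPowMap_comp (𝔞 : Ideal R) {l m n : ℕ} (h : l ≤ m) (h' : m ≤ n) :
    quotPowMap 𝔞 h' ≫ quotPowMap 𝔞 h = quotPowMap 𝔞 (h.trans h') := by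
  apply ModuleCat.hom_ext
  apply LinearMap.ext
  intro x
  obtain ⟨x, rfl⟩ := Submodule.Quotient.mk_surjective _ x
  rfl

/-- The transition maps of the system `Ext^i(R/𝔞ⁿ, M)`. -/
noncomputable def extPowMap (𝔞 : Ideal R) (M : ModuleCat.{u} R) (i : ℕ) (m n : ℕ) (h : m ≤ n) :
    Abelian.Ext (ModuleCat.of R (R ⧸ 𝔞 ^ m)) M i →ₗ[R]
      Abelian.Ext (ModuleCat.of R (R ⧸ 𝔞 ^ n)) M i :=
  Ext.precompOfLinear (Ext.mk₀ (quotPowMap 𝔞 h)) R M (zero_add i)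

lemma extPowMap_apply (𝔞 : Ideal R) (M : ModuleCat.{u} R) (i : ℕ) {m n : ℕ} (h : m ≤ n)
    (x : Abelian.Ext (ModuleCat.of R (R ⧸ 𝔞 ^ m)) M i) :
    extPowMap 𝔞 M i m n h x = (Ext.mk₀ (quotPowMap 𝔞 h)).comp x (zero_add i) := rfl

instance (𝔞 : Ideal R) (M : ModuleCat.{u} R) (i : ℕ) :
    DirectedSystem (fun n : ℕ => Abelian.Ext (ModuleCat.of R (R ⧸ 𝔞 ^ n)) M i)
      (fun m n h => extPowMap 𝔞 M i m n h) where
  map_self _ x := by simp [extPowMap_apply]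
  map_map _ _ _ h h' x := by
    simp only [extPowMap_apply]
    rw [Ext.mk₀_comp_mk₀_assoc, quotPowMap_comp]

/-- Local cohomology as a direct limit of modules, with `Ext` taken in the derived category. -/
abbrev Lim (𝔞 : Ideal R) (i : ℕ) (M : ModuleCat.{u} R) : Type u :=
  Module.DirectLimit (fun n : ℕ => Abelian.Ext (ModuleCat.of R (R ⧸ 𝔞 ^ n)) M i)
    (extPowMap 𝔞 M i)

/-- The canonical map from `Ext^i(R/𝔞ⁿ, M)`. -/
noncomputable abbrev Lim.of (𝔞 : Ideal R) (i : ℕ) (M : ModuleCat.{u} R) (n : ℕ) :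
    Abelian.Ext (ModuleCat.of R (R ⧸ 𝔞 ^ n)) M i →ₗ[R] Lim 𝔞 i M :=
  Module.DirectLimit.of R ℕ _ (extPowMap 𝔞 M i) n

instance (𝔞 : Ideal R) (i : ℕ) (M : ModuleCat.{u} R) :
    PreservesColimit (diagram (idealPowersDiagram 𝔞) i ⋙ (evaluation _ _).obj M)
      (forget (ModuleCat.{u} R)) := by
  have : PreservesFilteredColimitsOfSize.{0, 0} (forget (ModuleCat.{u} R)) :=
    preservesSmallestFilteredColimits_of_preservesFilteredColimits _
  infer_instance

/-- The coprojections of the colimit defining local cohomology. -/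
noncomputable def colimitMap (𝔞 : Ideal R) (i : ℕ) (M : ModuleCat.{u} R) (n : ℕ) :
    extObj (ModuleCat.of R (R ⧸ 𝔞 ^ n)) M i →ₗ[R]
      (colimit (diagram (idealPowersDiagram 𝔞) i ⋙ (evaluation _ _).obj M) : ModuleCat.{u} R) :=
  (colimit.ι (diagram (idealPowersDiagram 𝔞) i ⋙ (evaluation _ _).obj M) (op (op n))).hom

/-- The map from the direct limit to local cohomology. -/
noncomputable def limToColimit (𝔞 : Ideal R) (i : ℕ) (M : ModuleCat.{u} R) :
    Lim 𝔞 i M →ₗ[R]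
      (colimit (diagram (idealPowersDiagram 𝔞) i ⋙ (evaluation _ _).obj M) : ModuleCat.{u} R) :=
  Module.DirectLimit.lift R ℕ _ (extPowMap 𝔞 M i)
    (fun n => colimitMap 𝔞 i M n ∘ₗ
      (extObjEquiv (ModuleCat.of R (R ⧸ 𝔞 ^ n)) M i).symm.toLinearMap) (by
    intro m n h x
    obtain ⟨x, rfl⟩ := (extObjEquiv (ModuleCat.of R (R ⧸ 𝔞 ^ m)) M i).surjective x
    have h1 : extPowMap 𝔞 M i m n h (extObjEquiv (ModuleCat.of R (R ⧸ 𝔞 ^ m)) M i x) = _ :=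
      (extObjEquiv_map (quotPowMap 𝔞 h) M i x).symm
    rw [h1]
    rw [LinearMap.comp_apply, LinearMap.comp_apply, LinearEquiv.coe_coe, LinearEquiv.coe_coe,
      LinearEquiv.symm_apply_apply, LinearEquiv.symm_apply_apply]
    exact ConcreteCategory.congr_hom
      (colimit.w (diagram (idealPowersDiagram 𝔞) i ⋙ (evaluation _ _).obj M)
        (homOfLE h).op.op) x)

lemma limToColimit_of (𝔞 : Ideal R) (i : ℕ) (M : ModuleCat.{u} R) (n : ℕ)
    (x : extObj (ModuleCat.of R (R ⧸ 𝔞 ^ n)) M i) :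
    limToColimit 𝔞 i M (Lim.of 𝔞 i M n (extObjEquiv (ModuleCat.of R (R ⧸ 𝔞 ^ n)) M i x)) =
      colimitMap 𝔞 i M n x := by
  rw [limToColimit, Module.DirectLimit.lift_of, LinearMap.comp_apply, LinearEquiv.coe_coe,
    LinearEquiv.symm_apply_apply]

lemma limToColimit_bijective (𝔞 : Ideal R) (i : ℕ) (M : ModuleCat.{u} R) :
    Function.Bijective (limToColimit 𝔞 i M) := by
  constructor
  · rw [injective_iff_map_eq_zero]
    intro x hx
    obtain ⟨n, x, rfl⟩ := Module.DirectLimit.exists_of x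
    obtain ⟨x, rfl⟩ := (extObjEquiv (ModuleCat.of R (R ⧸ 𝔞 ^ n)) M i).surjective x
    rw [limToColimit_of] at hx
    obtain ⟨k, f, g, hk⟩ := Concrete.colimit_exists_of_rep_eq
      (diagram (idealPowersDiagram 𝔞) i ⋙ (evaluation _ _).obj M) (i := op (op n))
      (j := op (op n)) x 0 (hx.trans (map_zero (colimitMap 𝔞 i M n)).symm)
    obtain ⟨k, rfl⟩ : ∃ l : ℕ, k = op (op l) := ⟨k.unop.unop, rfl⟩
    have hnk : n ≤ k := leOfHom f.unop.unop
    rw [← Module.DirectLimit.of_f (hij := hnk)]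
    have h1 : extPowMap 𝔞 M i n k hnk (extObjEquiv (ModuleCat.of R (R ⧸ 𝔞 ^ n)) M i x) = _ :=
      (extObjEquiv_map (quotPowMap 𝔞 hnk) M i x).symm
    rw [h1]
    have h2 : extObjMap (quotPowMap 𝔞 hnk) M i x = 0 :=
      hk.trans (map_zero (extObjMap (quotPowMap 𝔞 hnk) M i))
    rw [h2, map_zero, map_zero]
  · intro y
    obtain ⟨j, y, rfl⟩ := Concrete.colimit_exists_rep
      (diagram (idealPowersDiagram 𝔞) i ⋙ (evaluation _ _).obj M) y
    obtain ⟨n, rfl⟩ : ∃ l : ℕ, j = op (op l) := ⟨j.unop.unop, rfl⟩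
    exact ⟨Lim.of 𝔞 i M n (extObjEquiv (ModuleCat.of R (R ⧸ 𝔞 ^ n)) M i y),
      limToColimit_of 𝔞 i M n y⟩

/-- Local cohomology is a direct limit of modules. -/
noncomputable def equivLim (𝔞 : Ideal R) (i : ℕ) (M : ModuleCat.{u} R) :
    ((localCohomology 𝔞 i).obj M) ≃ₗ[R] Lim 𝔞 i M :=
  (colimitObjIsoColimitCompEvaluation
    (diagram (idealPowersDiagram 𝔞) i) M).toLinearEquiv ≪≫ₗ
    (LinearEquiv.ofBijective _ (limToColimit_bijective 𝔞 i M)).symm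

end localCohomology

section ExtModule

open Abelian

variable {R : Type u} [CommRing R] {A B C : Type u} [AddCommGroup A] [Module R A]
  [AddCommGroup B] [Module R B] [AddCommGroup C] [Module R C]

/-- The short complex of module objects of an exact pair of linear maps. -/
abbrev exactComplex (f : A →ₗ[R] B) (g : B →ₗ[R] C) (h : Function.Exact f g) :
    ShortComplex (ModuleCat.{u} R) :=
  ShortComplex.mk (ModuleCat.ofHom f) (ModuleCat.ofHom g) (by
    rw [← ModuleCat.ofHom_comp, h.linearMap_comp_eq_zero]; rfl)

lemma exactComplex_shortExact {f : A →ₗ[R] B} {g : B →ₗ[R] C} (h : Function.Exact f g)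
    (hf : Function.Injective f) (hg : Function.Surjective g) :
    (exactComplex f g h).ShortExact where
  exact := (ShortComplex.ShortExact.moduleCat_exact_iff_function_exact _).2 h
  mono_f := (ModuleCat.mono_iff_injective _).2 hf
  epi_g := (ModuleCat.epi_iff_surjective _).2 hg

/-- Postcomposition with a linear map on `Ext`. -/
noncomputable def extPost (X : ModuleCat.{u} R) (j : ℕ) (f : A →ₗ[R] B) :
    Abelian.Ext X (ModuleCat.of R A) j →ₗ[R] Abelian.Ext X (ModuleCat.of R B) j :=
  Ext.postcompOfLinear (Ext.mk₀ (ModuleCat.ofHom f)) R X (add_zero j)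

lemma extPost_apply (X : ModuleCat.{u} R) (j : ℕ) (f : A →ₗ[R] B)
    (x : Abelian.Ext X (ModuleCat.of R A) j) :
    extPost X j f x = x.comp (Ext.mk₀ (ModuleCat.ofHom f)) (add_zero j) := rfl

lemma extPost_comp (X : ModuleCat.{u} R) (j : ℕ) (f : A →ₗ[R] B) (g : B →ₗ[R] C) :
    extPost X j (g ∘ₗ f) = extPost X j g ∘ₗ extPost X j f := by
  ext x
  rw [LinearMap.comp_apply, extPost_apply, extPost_apply, extPost_apply, ModuleCat.ofHom_comp,
    Ext.comp_assoc_of_third_deg_zero, Ext.mk₀_comp_mk₀]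

lemma extPost_id (X : ModuleCat.{u} R) (j : ℕ) :
    extPost X j (LinearMap.id : A →ₗ[R] A) = LinearMap.id := by
  ext x
  rw [extPost_apply, ModuleCat.ofHom_id, Ext.comp_mk₀_id, LinearMap.id_apply]

lemma extPost_smul_id (X : ModuleCat.{u} R) (j : ℕ) (r : R) :
    extPost X j (r • (LinearMap.id : A →ₗ[R] A)) = r • LinearMap.id := by
  ext x
  exact (Ext.smul_eq_comp_mk₀ x r).symm

/-- The connecting map of the long exact sequence of `Ext`. -/
noncomputable def extδ (X : ModuleCat.{u} R) (j : ℕ) {f : A →ₗ[R] B} {g : B →ₗ[R] C}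
    (h : Function.Exact f g) (hf : Function.Injective f) (hg : Function.Surjective g) :
    Abelian.Ext X (ModuleCat.of R C) j →ₗ[R] Abelian.Ext X (ModuleCat.of R A) (j + 1) :=
  Ext.postcompOfLinear (exactComplex_shortExact h hf hg).extClass R X rfl

section Exact

variable (X : ModuleCat.{u} R) (j : ℕ) {f : A →ₗ[R] B} {g : B →ₗ[R] C}
    (h : Function.Exact f g) (hf : Function.Injective f) (hg : Function.Surjective g)

include h hf hg in
lemma extPost_exact : Function.Exact (extPost X j f) (extPost X j g) := by
  have := Ext.covariant_sequence_exact₂' X (exactComplex_shortExact h hf hg) j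
  rw [ShortComplex.ab_exact_iff_function_exact] at this
  exact this

lemma extPost_extδ_exact : Function.Exact (extPost X j g) (extδ X j h hf hg) := by
  have := Ext.covariant_sequence_exact₃' X (exactComplex_shortExact h hf hg) j _ rfl
  rw [ShortComplex.ab_exact_iff_function_exact] at this
  exact this

lemma extδ_extPost_exact : Function.Exact (extδ X j h hf hg) (extPost X (j + 1) f) := by
  have := Ext.covariant_sequence_exact₁' X (exactComplex_shortExact h hf hg) j _ rfl
  rw [ShortComplex.ab_exact_iff_function_exact] at this
  exact this

end Exact

lemma extPost_zero_injective (X : ModuleCat.{u} R) {f : A →ₗ[R] B} (hf : Function.Injective f) :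
    Function.Injective (extPost X 0 f) := by
  rw [injective_iff_map_eq_zero]
  intro x hx
  obtain ⟨x, rfl⟩ := (Ext.mk₀_bijective _ _).2 x
  rw [extPost_apply, Ext.mk₀_comp_mk₀] at hx
  have h0 : x ≫ ModuleCat.ofHom f = 0 :=
    (Ext.mk₀_bijective _ _).1 (hx.trans (Ext.mk₀_zero _ _).symm)
  have : Mono (ModuleCat.ofHom f) := (ModuleCat.mono_iff_injective _).2 hf
  rw [Limits.zero_of_comp_mono _ h0, Ext.mk₀_zero]

lemma Module.Finite.of_exact_of_finite [IsNoetherianRing R] {M N P : Type*} [AddCommGroup M]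
    [AddCommGroup N] [AddCommGroup P] [Module R M] [Module R N] [Module R P] {f : M →ₗ[R] N}
    {g : N →ₗ[R] P} (h : Function.Exact f g) [Module.Finite R M] [Module.Finite R P] :
    Module.Finite R N := by
  have := isNoetherian_of_range_eq_ker f g (LinearMap.exact_iff.1 h).symm
  infer_instance

/-- `Ext^j(X, N)` is finitely generated. -/
def ExtFinite (X : ModuleCat.{u} R) (j : ℕ) (N : Type u) [AddCommGroup N] [Module R N] : Prop :=
  Module.Finite R (Abelian.Ext X (ModuleCat.of R N) j)

namespace ExtFinite

variable {X : ModuleCat.{u} R} {j : ℕ}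

lemma of_equiv (e : A ≃ₗ[R] B) (hA : ExtFinite X j A) : ExtFinite X j B := by
  have : Module.Finite R (Abelian.Ext X (ModuleCat.of R A) j) := hA
  refine Module.Finite.of_surjective (extPost X j e.toLinearMap) fun y => ?_
  refine ⟨extPost X j e.symm.toLinearMap y, ?_⟩
  rw [← LinearMap.comp_apply, ← extPost_comp]
  simp [extPost_id]

lemma of_finite [IsNoetherianRing R] [Module.Finite R X] [Module.Finite R A] :
    ExtFinite X j A :=
  have : Module.Finite R (ModuleCat.of R A) := ‹Module.Finite R A›
  ModuleCat.finite_ext R _ _ _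

variable [IsNoetherianRing R] {f : A →ₗ[R] B} {g : B →ₗ[R] C}

lemma middle (h : Function.Exact f g) (hf : Function.Injective f)
    (hg : Function.Surjective g) (hA : ExtFinite X j A) (hC : ExtFinite X j C) :
    ExtFinite X j B := by
  have : Module.Finite R (Abelian.Ext X (ModuleCat.of R A) j) := hA
  have : Module.Finite R (Abelian.Ext X (ModuleCat.of R C) j) := hC
  exact Module.Finite.of_exact_of_finite (extPost_exact X j h hf hg)

lemma right (h : Function.Exact f g) (hf : Function.Injective f)
    (hg : Function.Surjective g) (hB : ExtFinite X j B) (hA : ExtFinite X (j + 1) A) :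
    ExtFinite X j C := by
  have : Module.Finite R (Abelian.Ext X (ModuleCat.of R B) j) := hB
  have : Module.Finite R (Abelian.Ext X (ModuleCat.of R A) (j + 1)) := hA
  exact Module.Finite.of_exact_of_finite (extPost_extδ_exact X j h hf hg)

lemma left (h : Function.Exact f g) (hf : Function.Injective f)
    (hg : Function.Surjective g) (hC : ExtFinite X j C) (hB : ExtFinite X (j + 1) B) :
    ExtFinite X (j + 1) A := by
  have : Module.Finite R (Abelian.Ext X (ModuleCat.of R C) j) := hC
  have : Module.Finite R (Abelian.Ext X (ModuleCat.of R B) (j + 1)) := hB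
  exact Module.Finite.of_exact_of_finite (extδ_extPost_exact X j h hf hg)

lemma left_zero (hf : Function.Injective f) (hB : ExtFinite X 0 B) : ExtFinite X 0 A := by
  have : Module.Finite R (Abelian.Ext X (ModuleCat.of R B) 0) := hB
  exact Module.Finite.of_injective _ (extPost_zero_injective X hf)

/-- If multiplication by `x` is zero on `Ext`, and the kernel and cokernel of
multiplication by `x` on `N` have finitely generated `Ext`, then so does `N`. -/
lemma of_ker_coker (f : A →ₗ[R] A) (h0 : ∀ j, extPost X j f = 0)
    (hK : ∀ j, ExtFinite X j (LinearMap.ker f))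
    (hC : ∀ j, ExtFinite X j (A ⧸ LinearMap.range f)) (j : ℕ) : ExtFinite X j A := by
  have exK : Function.Exact (LinearMap.ker f).subtype f.rangeRestrict := by
    rw [LinearMap.exact_iff, LinearMap.ker_rangeRestrict, Submodule.range_subtype]
  have exC : Function.Exact (LinearMap.range f).subtype (LinearMap.range f).mkQ :=
    LinearMap.exact_subtype_mkQ _
  have hiK := (LinearMap.ker f).injective_subtype
  have hsK := f.surjective_rangeRestrict
  have hiC := (LinearMap.range f).injective_subtype
  have hsC := (LinearMap.range f).mkQ_surjective
  have hI (j : ℕ) : ExtFinite X j (LinearMap.range f) := by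
    have hcomp : extPost X j (LinearMap.range f).subtype ∘ₗ extPost X j f.rangeRestrict = 0 := by
      rw [← extPost_comp, ← h0 j]
      rfl
    have hker : Module.Finite R (LinearMap.ker (extPost X j (LinearMap.range f).subtype)) := by
      cases j with
      | zero =>
        rw [LinearMap.ker_eq_bot.2 (extPost_zero_injective X hiC)]
        infer_instance
      | succ j =>
        have := hC j
        have : Module.Finite R (Abelian.Ext X (ModuleCat.of R (A ⧸ LinearMap.range f)) j) := hC j
        rw [(LinearMap.exact_iff.1 (extδ_extPost_exact X j exC hiC hsC))]
        infer_instance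
    have hran : Module.Finite R (LinearMap.range (extPost X j f.rangeRestrict)) :=
      Module.Finite.of_injective (Submodule.inclusion (LinearMap.range_le_ker_iff.2 hcomp))
        (Submodule.inclusion_injective _)
    have : Module.Finite R (Abelian.Ext X (ModuleCat.of R (LinearMap.ker f)) (j + 1)) := hK _
    refine Module.Finite.of_exact_of_finite
      (f := (LinearMap.range (extPost X j f.rangeRestrict)).subtype)
      (g := extδ X j exK hiK hsK) ?_
    rw [LinearMap.exact_iff, Submodule.range_subtype]
    exact LinearMap.exact_iff.1 (extPost_extδ_exact X j exK hiK hsK)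
  exact middle exK hiK hsK (hK j) (hI j)

end ExtFinite

/-- Multiplication by an element of `𝔞` is zero on `Ext(R/𝔞, -)`. -/
lemma smul_ext_eq_zero (𝔞 : Ideal R) {a : R} (ha : a ∈ 𝔞) (M : ModuleCat.{u} R) (j : ℕ)
    (x : Abelian.Ext (ModuleCat.of R (R ⧸ 𝔞)) M j) : a • x = 0 := by
  have h0 : a • 𝟙 (ModuleCat.of R (R ⧸ 𝔞)) = 0 := by
    apply ModuleCat.hom_ext
    apply LinearMap.ext
    intro y
    obtain ⟨y, rfl⟩ := Submodule.Quotient.mk_surjective _ y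
    exact (Submodule.Quotient.mk_eq_zero _).2 (𝔞.mul_mem_right y ha)
  calc a • x = a • (Ext.mk₀ (𝟙 _)).comp x (zero_add j) := by rw [Ext.mk₀_id_comp]
    _ = (Ext.mk₀ (a • 𝟙 (ModuleCat.of R (R ⧸ 𝔞)))).comp x (zero_add j) := by
      rw [Ext.mk₀_smul, Ext.smul_comp]
    _ = 0 := by rw [h0, Ext.mk₀_zero, Ext.zero_comp]

variable (A) in
/-- Evaluation at `1` of homomorphisms from a quotient ring. -/
def evalQuotOne (𝔞 : Ideal R) : ((R ⧸ 𝔞) →ₗ[R] A) →ₗ[R] A where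
  toFun f := f 1
  map_add' _ _ := rfl
  map_smul' _ _ := rfl

lemma evalQuotOne_injective (𝔞 : Ideal R) : Function.Injective (evalQuotOne A 𝔞) := by
  intro f g h
  ext
  exact h

lemma range_evalQuotOne (𝔞 : Ideal R) :
    LinearMap.range (evalQuotOne A 𝔞) = Submodule.torsionBySet R A 𝔞 := by
  ext y
  rw [Submodule.mem_torsionBySet_iff]
  constructor
  · rintro ⟨f, rfl⟩ ⟨a, ha⟩
    have h0 : a • (1 : R ⧸ 𝔞) = 0 := by
      rw [← map_one (Ideal.Quotient.mk 𝔞)]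
      exact (Submodule.Quotient.mk_eq_zero _).2 (𝔞.mul_mem_right 1 ha)
    change a • f 1 = 0
    rw [← map_smul, h0, map_zero]
  · intro h
    refine ⟨Submodule.liftQ 𝔞 (LinearMap.toSpanSingleton R A y) fun a ha => h ⟨a, ha⟩, ?_⟩
    exact one_smul R y

lemma finite_hom_iff (𝔞 : Ideal R) :
    Module.Finite R ((R ⧸ 𝔞) →ₗ[R] A) ↔ (Submodule.torsionBySet R A 𝔞).FG := by
  rw [← range_evalQuotOne, ← Module.Finite.iff_fg]
  exact Module.Finite.equiv_iff (LinearEquiv.ofInjective _ (evalQuotOne_injective 𝔞))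

/-- `Ext⁰(R/𝔞, N)` is the submodule of `N` of elements annihilated by `𝔞`. -/
lemma extFinite_zero_iff (𝔞 : Ideal R) :
    ExtFinite (ModuleCat.of R (R ⧸ 𝔞)) 0 A ↔ (Submodule.torsionBySet R A 𝔞).FG := by
  rw [← finite_hom_iff]
  exact Module.Finite.equiv_iff (Ext.linearEquiv₀.trans ModuleCat.homLinearEquiv)

end ExtModule

namespace localCohomology

open Abelian

variable {R : Type u} [CommRing R]

/-- Composition with an `Ext` class on local cohomology. -/
noncomputable def limComp (𝔞 : Ideal R) {M N : ModuleCat.{u} R} {i j p : ℕ}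
    (β : Abelian.Ext M N p) (h : i + p = j) : Lim 𝔞 i M →ₗ[R] Lim 𝔞 j N :=
  Module.DirectLimit.lift R ℕ _ (extPowMap 𝔞 M i)
    (fun n => Lim.of 𝔞 j N n ∘ₗ Ext.postcompOfLinear β R _ h) (by
      intro m n hmn x
      refine Eq.trans ?_ (Module.DirectLimit.of_f (hij := hmn))
      rw [LinearMap.comp_apply]
      congr 1
      exact Ext.comp_assoc (Ext.mk₀ (quotPowMap 𝔞 hmn)) x β (zero_add i) h (by omega))

lemma limComp_of (𝔞 : Ideal R) {M N : ModuleCat.{u} R} {i j p : ℕ}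
    (β : Abelian.Ext M N p) (h : i + p = j) (n : ℕ)
    (x : Abelian.Ext (ModuleCat.of R (R ⧸ 𝔞 ^ n)) M i) :
    limComp 𝔞 β h (Lim.of 𝔞 i M n x) = Lim.of 𝔞 j N n (x.comp β h) := by
  rw [limComp, Module.DirectLimit.lift_of]
  rfl

lemma limComp_exact (𝔞 : Ideal R) {M N P : ModuleCat.{u} R} {i j k p q : ℕ}
    (α : Abelian.Ext M N p) (β : Abelian.Ext N P q) (h : i + p = j) (h' : j + q = k)
    (H : ∀ X : ModuleCat.{u} R, Function.Exact (Ext.postcompOfLinear α R X h)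
      (Ext.postcompOfLinear β R X h')) :
    Function.Exact (limComp 𝔞 α h) (limComp 𝔞 β h') := by
  intro z
  constructor
  · intro hz
    obtain ⟨n, x, rfl⟩ := Module.DirectLimit.exists_of z
    rw [limComp_of] at hz
    obtain ⟨m, hm, hx⟩ := Module.DirectLimit.of.zero_exact hz
    have h1 : (extPowMap 𝔞 N j n m hm x).comp β h' = 0 := by
      rw [← hx]
      exact Ext.comp_assoc (Ext.mk₀ (quotPowMap 𝔞 hm)) x β (zero_add j) h' (by omega)
    obtain ⟨y, hy⟩ := (H _ _).1 h1
    refine ⟨Lim.of 𝔞 i M m y, ?_⟩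
    rw [limComp_of]
    exact (congrArg (Lim.of 𝔞 j N m) hy).trans Module.DirectLimit.of_f
  · rintro ⟨z, rfl⟩
    obtain ⟨n, x, rfl⟩ := Module.DirectLimit.exists_of z
    rw [limComp_of, limComp_of]
    have h1 : (x.comp α h).comp β h' = 0 := (H _ _).2 ⟨x, rfl⟩
    rw [h1, map_zero]

lemma isTorsionIdeal_lim (𝔞 : Ideal R) (i : ℕ) (M : ModuleCat.{u} R) :
    IsTorsionIdeal 𝔞 (Lim 𝔞 i M) := by
  intro z
  obtain ⟨n, x, rfl⟩ := Module.DirectLimit.exists_of z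
  refine ⟨n, fun a ha => ?_⟩
  rw [← map_smul, smul_ext_eq_zero _ ha, map_zero]

lemma lim_succ_eq_zero_of_injective (𝔞 : Ideal R) (i : ℕ) (M : ModuleCat.{u} R) [Injective M]
    (z : Lim 𝔞 (i + 1) M) : z = 0 := by
  obtain ⟨n, x, rfl⟩ := Module.DirectLimit.exists_of z
  rw [x.eq_zero_of_injective, map_zero]

section Modules

variable {A B C : Type u} [AddCommGroup A] [Module R A]
  [AddCommGroup B] [Module R B] [AddCommGroup C] [Module R C]

/-- The map on local cohomology induced by a linear map. -/
noncomputable def limMap (𝔞 : Ideal R) (i : ℕ) (f : A →ₗ[R] B) :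
    Lim 𝔞 i (ModuleCat.of R A) →ₗ[R] Lim 𝔞 i (ModuleCat.of R B) :=
  limComp 𝔞 (Ext.mk₀ (ModuleCat.ofHom f)) (add_zero i)

/-- The connecting map in local cohomology. -/
noncomputable def limδ (𝔞 : Ideal R) (i : ℕ) {f : A →ₗ[R] B} {g : B →ₗ[R] C}
    (h : Function.Exact f g) (hf : Function.Injective f) (hg : Function.Surjective g) :
    Lim 𝔞 i (ModuleCat.of R C) →ₗ[R] Lim 𝔞 (i + 1) (ModuleCat.of R A) :=
  limComp 𝔞 (exactComplex_shortExact h hf hg).extClass rfl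

variable (𝔞 : Ideal R) (i : ℕ) {f : A →ₗ[R] B} {g : B →ₗ[R] C}
    (h : Function.Exact f g) (hf : Function.Injective f) (hg : Function.Surjective g)

include h hf hg in
lemma limMap_exact : Function.Exact (limMap 𝔞 i f) (limMap 𝔞 i g) :=
  limComp_exact 𝔞 _ _ _ _ fun X => extPost_exact X i h hf hg

lemma limMap_limδ_exact : Function.Exact (limMap 𝔞 i g) (limδ 𝔞 i h hf hg) :=
  limComp_exact 𝔞 _ _ _ _ fun X => extPost_extδ_exact X i h hf hg

lemma limδ_limMap_exact : Function.Exact (limδ 𝔞 i h hf hg) (limMap 𝔞 (i + 1) f) :=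
  limComp_exact 𝔞 _ _ _ _ fun X => extδ_extPost_exact X i h hf hg

include h hf hg in
/-- Local cohomology is unchanged in positive degree by an acyclic submodule. -/
lemma nonempty_lim_equiv_of_left (hA : ∀ i (z : Lim 𝔞 (i + 1) (ModuleCat.of R A)), z = 0) :
    Nonempty (Lim 𝔞 (i + 1) (ModuleCat.of R B) ≃ₗ[R] Lim 𝔞 (i + 1) (ModuleCat.of R C)) := by
  refine ⟨LinearEquiv.ofBijective (limMap 𝔞 (i + 1) g) ⟨?_, fun y => ?_⟩⟩
  · rw [injective_iff_map_eq_zero]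
    intro x hx
    obtain ⟨y, rfl⟩ := (limMap_exact 𝔞 (i + 1) h hf hg x).1 hx
    rw [hA i y, map_zero]
  · exact (limMap_limδ_exact 𝔞 (i + 1) h hf hg y).1 (hA _ _)

include h hf hg in
/-- Dimension shifting along an acyclic module. -/
lemma nonempty_lim_equiv_of_middle (hB : ∀ i (z : Lim 𝔞 i (ModuleCat.of R B)), z = 0) :
    Nonempty (Lim 𝔞 i (ModuleCat.of R C) ≃ₗ[R] Lim 𝔞 (i + 1) (ModuleCat.of R A)) := by
  refine ⟨LinearEquiv.ofBijective (limδ 𝔞 i h hf hg) ⟨?_, fun y => ?_⟩⟩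
  · rw [injective_iff_map_eq_zero]
    intro x hx
    obtain ⟨y, rfl⟩ := (limMap_limδ_exact 𝔞 i h hf hg x).1 hx
    rw [hB i y, map_zero]
  · exact (limδ_limMap_exact 𝔞 i h hf hg y).1 (hB _ _)

/-- The `𝔞`-torsion submodule. -/
def gammaSub (𝔞 : Ideal R) (A : Type u) [AddCommGroup A] [Module R A] : Submodule R A where
  carrier := {x | ∃ n : ℕ, ∀ a ∈ 𝔞 ^ n, a • x = 0}
  zero_mem' := ⟨0, fun a _ => smul_zero a⟩
  add_mem' := by
    rintro x y ⟨m, hm⟩ ⟨n, hn⟩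
    refine ⟨m + n, fun a ha => ?_⟩
    rw [smul_add, hm a (Ideal.pow_le_pow_right (by omega) ha),
      hn a (Ideal.pow_le_pow_right (by omega) ha), add_zero]
  smul_mem' := by
    rintro r x ⟨m, hm⟩
    exact ⟨m, fun a ha => by rw [smul_comm, hm a ha, smul_zero]⟩

/-- The value at `1` of the homomorphism corresponding to an element of `Ext⁰`. -/
noncomputable def extZeroEval (n : ℕ) :
    Abelian.Ext (ModuleCat.of R (R ⧸ 𝔞 ^ n)) (ModuleCat.of R A) 0 →ₗ[R] A :=
  evalQuotOne A (𝔞 ^ n) ∘ₗ (Ext.linearEquiv₀.trans ModuleCat.homLinearEquiv).toLinearMap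

lemma extZeroEval_mk₀ (n : ℕ) (φ : ModuleCat.of R (R ⧸ 𝔞 ^ n) ⟶ ModuleCat.of R A) :
    extZeroEval 𝔞 n (Ext.mk₀ φ) = φ.hom 1 := by
  have : Ext.linearEquiv₀ (R := R) (Ext.mk₀ φ) = φ :=
    (Ext.mk₀_bijective _ _).1 (Ext.mk₀_linearEquiv₀_apply _)
  rw [extZeroEval, LinearMap.comp_apply, LinearEquiv.coe_coe, LinearEquiv.trans_apply, this]
  rfl

lemma extZeroEval_injective (n : ℕ) : Function.Injective (extZeroEval (A := A) 𝔞 n) :=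
  (evalQuotOne_injective (A := A) (𝔞 ^ n)).comp (LinearEquiv.injective _)

lemma range_extZeroEval (n : ℕ) :
    LinearMap.range (extZeroEval (A := A) 𝔞 n) = Submodule.torsionBySet R A ↑(𝔞 ^ n) := by
  rw [extZeroEval, LinearMap.range_comp_of_range_eq_top _ (LinearEquiv.range _),
    range_evalQuotOne]

variable (A) in
/-- The map from zeroth local cohomology to the module. -/
noncomputable def limZeroEval : Lim 𝔞 0 (ModuleCat.of R A) →ₗ[R] A :=
  Module.DirectLimit.lift R ℕ _ (extPowMap 𝔞 (ModuleCat.of R A) 0) (fun n => extZeroEval 𝔞 n) (by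
    intro m n h x
    obtain ⟨φ, rfl⟩ := (Ext.mk₀_bijective _ _).2 x
    rw [extPowMap_apply, Ext.mk₀_comp_mk₀, extZeroEval_mk₀, extZeroEval_mk₀]
    rfl)

lemma limZeroEval_of (n : ℕ) (x : Abelian.Ext (ModuleCat.of R (R ⧸ 𝔞 ^ n)) (ModuleCat.of R A) 0) :
    limZeroEval A 𝔞 (Lim.of 𝔞 0 _ n x) = extZeroEval 𝔞 n x := by
  rw [limZeroEval, Module.DirectLimit.lift_of]

lemma limZeroEval_injective : Function.Injective (limZeroEval A 𝔞) := by
  rw [injective_iff_map_eq_zero]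
  intro z hz
  obtain ⟨n, x, rfl⟩ := Module.DirectLimit.exists_of z
  rw [limZeroEval_of] at hz
  rw [extZeroEval_injective 𝔞 n (hz.trans (map_zero _).symm), map_zero]

lemma range_limZeroEval : LinearMap.range (limZeroEval A 𝔞) = gammaSub 𝔞 A := by
  ext y
  constructor
  · rintro ⟨z, rfl⟩
    obtain ⟨n, x, rfl⟩ := Module.DirectLimit.exists_of z
    rw [limZeroEval_of]
    have h1 : extZeroEval 𝔞 n x ∈ LinearMap.range (extZeroEval (A := A) 𝔞 n) := ⟨x, rfl⟩
    rw [range_extZeroEval, Submodule.mem_torsionBySet_iff] at h1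
    exact ⟨n, fun a ha => h1 ⟨a, ha⟩⟩
  · rintro ⟨n, hn⟩
    have h1 : y ∈ LinearMap.range (extZeroEval (A := A) 𝔞 n) := by
      rw [range_extZeroEval, Submodule.mem_torsionBySet_iff]
      exact fun a => hn a a.2
    obtain ⟨x, rfl⟩ := h1
    exact ⟨Lim.of 𝔞 0 _ n x, limZeroEval_of 𝔞 n x⟩

lemma limZeroEval_limMap (f : A →ₗ[R] B) (z : Lim 𝔞 0 (ModuleCat.of R A)) :
    limZeroEval B 𝔞 (limMap 𝔞 0 f z) = f (limZeroEval A 𝔞 z) := by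
  obtain ⟨n, x, rfl⟩ := Module.DirectLimit.exists_of z
  obtain ⟨φ, rfl⟩ := (Ext.mk₀_bijective _ _).2 x
  rw [limMap, limComp_of, limZeroEval_of, limZeroEval_of, Ext.mk₀_comp_mk₀, extZeroEval_mk₀,
    extZeroEval_mk₀]
  rfl

variable (A) in
/-- Zeroth local cohomology is the torsion submodule. -/
noncomputable def limZeroEquiv : Lim 𝔞 0 (ModuleCat.of R A) ≃ₗ[R] gammaSub 𝔞 A :=
  (LinearEquiv.ofInjective _ (limZeroEval_injective 𝔞)) ≪≫ₗ
    LinearEquiv.ofEq _ _ (range_limZeroEval 𝔞)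

end Modules

end localCohomology

namespace localCohomology

open Abelian

variable {R : Type u} [CommRing R] (𝔞 : Ideal R)

lemma isTorsionIdeal_gammaSub (A : Type u) [AddCommGroup A] [Module R A] :
    IsTorsionIdeal 𝔞 (gammaSub 𝔞 A) := by
  rintro ⟨x, n, hn⟩
  exact ⟨n, fun a ha => Subtype.ext (hn a ha)⟩

variable {𝔞} in
lemma _root_.IsTorsionIdeal.of_injective {A B : Type u} [AddCommGroup A] [Module R A]
    [AddCommGroup B] [Module R B] (hB : IsTorsionIdeal 𝔞 B) (f : A →ₗ[R] B)
    (hf : Function.Injective f) : IsTorsionIdeal 𝔞 A := fun x => by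
  obtain ⟨n, hn⟩ := hB (f x)
  exact ⟨n, fun a ha => hf (by rw [map_smul, hn a ha, map_zero])⟩

variable {𝔞} in
lemma _root_.IsTorsionIdeal.of_surjective {A B : Type u} [AddCommGroup A] [Module R A]
    [AddCommGroup B] [Module R B] (hA : IsTorsionIdeal 𝔞 A) (f : A →ₗ[R] B)
    (hf : Function.Surjective f) : IsTorsionIdeal 𝔞 B := fun y => by
  obtain ⟨x, rfl⟩ := hf y
  obtain ⟨n, hn⟩ := hA x
  exact ⟨n, fun a ha => by rw [← map_smul, hn a ha, map_zero]⟩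

/-- A finitely generated submodule of a torsion module is killed by a power of the ideal. -/
lemma _root_.IsTorsionIdeal.exists_pow_smul_eq_zero {A B : Type u} [AddCommGroup A] [Module R A]
    [AddCommGroup B] [Module R B] [Module.Finite R B] {𝔞 : Ideal R} (hA : IsTorsionIdeal 𝔞 A)
    (f : B →ₗ[R] A) : ∃ n : ℕ, ∀ a ∈ 𝔞 ^ n, ∀ b, a • f b = 0 := by
  obtain ⟨s, hs⟩ := Module.Finite.fg_top (R := R) (M := B)
  choose n hn using fun b => hA (f b)
  refine ⟨s.sup n, fun a ha b => ?_⟩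
  have hb : b ∈ Submodule.span R (s : Set B) := hs ▸ Submodule.mem_top
  induction hb using Submodule.span_induction with
  | mem x hx => exact hn x a (Ideal.pow_le_pow_right (Finset.le_sup hx) ha)
  | zero => rw [map_zero, smul_zero]
  | add x y _ _ hx hy => rw [map_add, smul_add, hx, hy, add_zero]
  | smul r x _ hx => rw [map_smul, smul_comm, hx, smul_zero]

/-- The torsion submodule of an injective module over a Noetherian ring is injective. -/
lemma injective_gammaSub [IsNoetherianRing R] (E : Type u) [AddCommGroup E] [Module R E]
    [Module.Injective R E] : Module.Injective R (gammaSub 𝔞 E) := by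
  refine Module.Baer.injective fun J φ => ?_
  obtain ⟨k, hk⟩ := (isTorsionIdeal_gammaSub 𝔞 E).exists_pow_smul_eq_zero φ
  obtain ⟨l, hl⟩ := Ideal.exists_pow_inf_eq_pow_smul 𝔞 (M := R) J
  have hφ : ∀ x : J, (x : R) ∈ 𝔞 ^ (k + l) → φ x = 0 := by
    intro x hx
    have h1 : (x : R) ∈ 𝔞 ^ k • J := by
      have h2 : (x : R) ∈ 𝔞 ^ (k + l) • (⊤ : Submodule R R) ⊓ J :=
        ⟨by simpa using hx, x.2⟩
      rw [hl _ (Nat.le_add_left l k), Nat.add_sub_cancel] at h2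
      exact Submodule.smul_mono le_rfl inf_le_right h2
    have h3 : ∀ z ∈ 𝔞 ^ k • J, ∃ h : z ∈ J, φ ⟨z, h⟩ = 0 := by
      intro z hz
      refine Submodule.smul_induction_on hz (fun r hr n hn => ?_) ?_
      · exact ⟨J.smul_mem r hn, (map_smul φ r ⟨n, hn⟩).trans (hk r hr _)⟩
      · rintro a b ⟨ha, ha'⟩ ⟨hb, hb'⟩
        refine ⟨J.add_mem ha hb, (map_add φ ⟨a, ha⟩ ⟨b, hb⟩).trans ?_⟩
        rw [ha', hb', add_zero]
    exact (h3 _ h1).2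
  let f : J →ₗ[R] R ⧸ 𝔞 ^ (k + l) := (𝔞 ^ (k + l)).mkQ ∘ₗ J.subtype
  have hker : LinearMap.ker f ≤ LinearMap.ker ((gammaSub 𝔞 E).subtype ∘ₗ φ) := by
    intro x hx
    have h0 : (x : R) ∈ 𝔞 ^ (k + l) := (Submodule.Quotient.mk_eq_zero _).1 hx
    rw [LinearMap.mem_ker, LinearMap.comp_apply, hφ x h0, map_zero]
  obtain ⟨h, hh⟩ := Module.Injective.out ((LinearMap.ker f).liftQ f le_rfl)
    (LinearMap.ker_eq_bot.1 (Submodule.ker_liftQ_eq_bot' _ _ rfl))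
    ((LinearMap.ker f).liftQ _ hker)
  have h1 : h 1 ∈ gammaSub 𝔞 E := ⟨k + l, fun a ha => by
    have h0 : a • (1 : R ⧸ 𝔞 ^ (k + l)) = 0 := by
      rw [← map_one (Ideal.Quotient.mk _)]
      exact (Submodule.Quotient.mk_eq_zero _).2 (Ideal.mul_mem_right 1 _ ha)
    rw [← map_smul, h0, map_zero]⟩
  refine ⟨LinearMap.toSpanSingleton R _ ⟨h 1, h1⟩, fun x hx => Subtype.ext ?_⟩
  have h2 := hh (Submodule.Quotient.mk ⟨x, hx⟩)
  rw [Submodule.liftQ_apply, Submodule.liftQ_apply] at h2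
  refine Eq.trans ?_ h2
  change x • h 1 = h (Submodule.Quotient.mk x)
  rw [← map_smul]
  congr 1
  change x • Submodule.Quotient.mk (1 : R) = _
  rw [← Submodule.Quotient.mk_smul, smul_eq_mul, mul_one]

lemma exists_injective_embedding (A : Type u) [AddCommGroup A] [Module R A] :
    ∃ (E : ModuleCat.{u} R) (f : A →ₗ[R] E), Module.Injective R E ∧ Function.Injective f := by
  let A' := ModuleCat.of R A
  let E : ModuleCat.{u} R := Injective.under A'
  have hE : Injective (ModuleCat.of R E) := Injective.injective_under A'
  exact ⟨E, (Injective.ι A').hom, Module.injective_module_of_injective_object R E,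
    (ModuleCat.mono_iff_injective _).1 (Injective.ι_mono A')⟩

lemma gammaSub_eq_top {A : Type u} [AddCommGroup A] [Module R A] (hA : IsTorsionIdeal 𝔞 A) :
    gammaSub 𝔞 A = ⊤ :=
  eq_top_iff.2 fun x _ => hA x

lemma limZeroEval_surjective {A : Type u} [AddCommGroup A] [Module R A]
    (hA : IsTorsionIdeal 𝔞 A) : Function.Surjective (limZeroEval A 𝔞) := by
  rw [← LinearMap.range_eq_top, range_limZeroEval, gammaSub_eq_top 𝔞 hA]

/-- Torsion modules are acyclic for local cohomology. -/
lemma lim_succ_eq_zero_of_isTorsionIdeal [IsNoetherianRing R] (i : ℕ) {A : Type u}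
    [AddCommGroup A] [Module R A] (hA : IsTorsionIdeal 𝔞 A)
    (z : Lim 𝔞 (i + 1) (ModuleCat.of R A)) : z = 0 := by
  induction i generalizing A with
  | zero =>
    obtain ⟨E, f, hE, hf⟩ := exists_injective_embedding (R := R) A
    let I := gammaSub 𝔞 E
    let f' : A →ₗ[R] I := f.codRestrict I fun x => by
      obtain ⟨n, hn⟩ := hA x
      exact ⟨n, fun a ha => by rw [← map_smul, hn a ha, map_zero]⟩
    have hI : Module.Injective R I := injective_gammaSub 𝔞 E
    have hIt : IsTorsionIdeal 𝔞 I := isTorsionIdeal_gammaSub 𝔞 E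
    have hf' : Function.Injective f' := fun x y h => hf (congrArg Subtype.val h)
    let g := (LinearMap.range f').mkQ
    have hg : Function.Surjective g := Submodule.mkQ_surjective _
    have h : Function.Exact f' g := LinearMap.exact_map_mkQ_range f'
    have : Injective (ModuleCat.of R I) := Module.injective_object_of_injective_module R _
    obtain ⟨y, rfl⟩ := (limδ_limMap_exact 𝔞 0 h hf' hg z).1
      (lim_succ_eq_zero_of_injective 𝔞 0 _ _)
    refine (limMap_limδ_exact 𝔞 0 h hf' hg y).2 ?_
    obtain ⟨b, hb⟩ := hg (limZeroEval _ 𝔞 y)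
    obtain ⟨w, rfl⟩ := limZeroEval_surjective 𝔞 hIt b
    refine ⟨w, limZeroEval_injective 𝔞 ?_⟩
    rw [limZeroEval_limMap, hb]
  | succ i ih =>
    obtain ⟨E, f, hE, hf⟩ := exists_injective_embedding (R := R) A
    let I := gammaSub 𝔞 E
    let f' : A →ₗ[R] I := f.codRestrict I fun x => by
      obtain ⟨n, hn⟩ := hA x
      exact ⟨n, fun a ha => by rw [← map_smul, hn a ha, map_zero]⟩
    have hI : Module.Injective R I := injective_gammaSub 𝔞 E
    have hIt : IsTorsionIdeal 𝔞 I := isTorsionIdeal_gammaSub 𝔞 E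
    have hf' : Function.Injective f' := fun x y h => hf (congrArg Subtype.val h)
    let g := (LinearMap.range f').mkQ
    have hg : Function.Surjective g := Submodule.mkQ_surjective _
    have h : Function.Exact f' g := LinearMap.exact_map_mkQ_range f'
    have : Injective (ModuleCat.of R I) := Module.injective_object_of_injective_module R _
    obtain ⟨y, rfl⟩ := (limδ_limMap_exact 𝔞 (i + 1) h hf' hg z).1
      (lim_succ_eq_zero_of_injective 𝔞 (i + 1) _ _)
    rw [ih (hIt.of_surjective g hg) y, map_zero]

/-- Over a Noetherian ring, a module without torsion embeds in an injective module without
torsion. -/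
lemma exists_torsionFree_injective_embedding [IsNoetherianRing R] (A : Type u) [AddCommGroup A]
    [Module R A] (hA : gammaSub 𝔞 A = ⊥) :
    ∃ (E : ModuleCat.{u} R) (f : A →ₗ[R] E), Module.Injective R E ∧ Function.Injective f ∧
      gammaSub 𝔞 E = ⊥ := by
  obtain ⟨E, f, hE, hf⟩ := exists_injective_embedding (R := R) A
  have hI : Module.Injective R (gammaSub 𝔞 E) := injective_gammaSub 𝔞 E
  obtain ⟨p, hp⟩ := Module.Injective.out (gammaSub 𝔞 E).subtype
    (gammaSub 𝔞 E).injective_subtype LinearMap.id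
  let K := LinearMap.ker p
  have hKΓ : gammaSub 𝔞 E ⊓ K = ⊥ := by
    rw [eq_bot_iff]
    rintro x ⟨hx, hx'⟩
    have h1 : p x = ⟨x, hx⟩ := hp ⟨x, hx⟩
    exact congrArg Subtype.val (h1.symm.trans hx')
  let q : E →ₗ[R] K := LinearMap.codRestrict K (LinearMap.id - (gammaSub 𝔞 E).subtype ∘ₗ p)
    fun x => by
      have := hp (p x)
      simp only [LinearMap.id_apply] at this
      simp only [K, LinearMap.mem_ker, LinearMap.sub_apply, LinearMap.comp_apply, map_sub, this,
        LinearMap.id_apply, sub_self]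
  have hq : ∀ x : K, q x = x := fun x => Subtype.ext (by
    have : p x = 0 := x.2
    simp [q, this])
  refine ⟨ModuleCat.of R K, q ∘ₗ f, ⟨?_⟩, ?_, ?_⟩
  · intro X Y _ _ _ _ u hu v
    obtain ⟨w, hw⟩ := Module.Injective.out u hu (K.subtype ∘ₗ v)
    exact ⟨q ∘ₗ w, fun x => by
      rw [LinearMap.comp_apply, hw]
      exact hq _⟩
  · rw [injective_iff_map_eq_zero]
    intro x hx
    have h1 : f x = p (f x) := sub_eq_zero.1 (congrArg Subtype.val hx)
    obtain ⟨n, hn⟩ := (p (f x)).2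
    have h2 : x ∈ gammaSub 𝔞 A := ⟨n, fun a ha => hf (by
      rw [map_smul, h1, hn a ha, map_zero])⟩
    rw [hA] at h2
    exact h2
  · rw [eq_bot_iff]
    rintro x ⟨n, hn⟩
    have h1 : (x : E) ∈ gammaSub 𝔞 E ⊓ K := ⟨⟨n, fun a ha => congrArg Subtype.val (hn a ha)⟩, x.2⟩
    rw [hKΓ] at h1
    exact Subtype.ext h1

lemma torsionBySet_le_gammaSub (A : Type u) [AddCommGroup A] [Module R A] :
    Submodule.torsionBySet R A 𝔞 ≤ gammaSub 𝔞 A := fun x hx => ⟨1, fun a ha =>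
  (Submodule.mem_torsionBySet_iff _ _).1 hx ⟨a, by simpa using ha⟩⟩

lemma gammaSub_quotient_gammaSub [IsNoetherianRing R] (A : Type u) [AddCommGroup A]
    [Module R A] : gammaSub 𝔞 (A ⧸ gammaSub 𝔞 A) = ⊥ := by
  rw [eq_bot_iff]
  rintro x ⟨n, hn⟩
  obtain ⟨x, rfl⟩ := Submodule.Quotient.mk_surjective _ x
  refine (Submodule.Quotient.mk_eq_zero _).2 ?_
  have hn' : ∀ a ∈ 𝔞 ^ n, a • x ∈ gammaSub 𝔞 A := fun a ha =>
    (Submodule.Quotient.mk_eq_zero _).1 (hn a ha)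
  let φ : ↥(𝔞 ^ n) →ₗ[R] gammaSub 𝔞 A :=
    ((LinearMap.toSpanSingleton R A x).domRestrict (𝔞 ^ n)).codRestrict _ fun a => hn' a a.2
  obtain ⟨m, hm⟩ := (isTorsionIdeal_gammaSub 𝔞 A).exists_pow_smul_eq_zero φ
  refine ⟨m + n, fun a ha => ?_⟩
  rw [pow_add] at ha
  refine Submodule.mul_induction_on ha (fun r hr s hs => ?_) fun r s hr hs => ?_
  · rw [mul_smul]
    exact congrArg Subtype.val (hm r hr ⟨s, hs⟩)
  · rw [add_smul, hr, hs, add_zero]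

/-- Dimension shifting for modules without torsion. -/
lemma exists_dimension_shift [IsNoetherianRing R] (A : Type u) [AddCommGroup A]
    [Module R A] (hA : gammaSub 𝔞 A = ⊥) :
    ∃ L : ModuleCat.{u} R,
      (∀ i, Nonempty (Lim 𝔞 i L ≃ₗ[R] Lim 𝔞 (i + 1) (ModuleCat.of R A))) ∧
      ∀ j, ExtFinite (ModuleCat.of R (R ⧸ 𝔞)) (j + 1) A →
        ExtFinite (ModuleCat.of R (R ⧸ 𝔞)) j L := by
  obtain ⟨E, f, hE, hf, hΓ⟩ := exists_torsionFree_injective_embedding 𝔞 A hA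
  let g := (LinearMap.range f).mkQ
  have hg : Function.Surjective g := Submodule.mkQ_surjective _
  have h : Function.Exact f g := LinearMap.exact_map_mkQ_range f
  have hE' : Injective (ModuleCat.of R E) := Module.injective_object_of_injective_module R _
  refine ⟨ModuleCat.of R (E ⧸ LinearMap.range f), fun i =>
    nonempty_lim_equiv_of_middle 𝔞 i h hf hg fun i z => ?_, fun j hj =>
    ExtFinite.right h hf hg ?_ hj⟩
  · cases i with
    | zero =>
      refine limZeroEval_injective 𝔞 ?_
      have h1 : limZeroEval E 𝔞 z ∈ gammaSub 𝔞 E := by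
        rw [← range_limZeroEval]
        exact ⟨z, rfl⟩
      rw [hΓ] at h1
      rw [map_zero]
      exact h1
    | succ i => exact lim_succ_eq_zero_of_injective 𝔞 i (ModuleCat.of R E) z
  · cases j with
    | zero =>
      rw [extFinite_zero_iff, eq_bot_iff.2 ((torsionBySet_le_gammaSub 𝔞 E).trans hΓ.le)]
      exact Submodule.fg_bot
    | succ j =>
      have : Subsingleton (Abelian.Ext (ModuleCat.of R (R ⧸ 𝔞)) (ModuleCat.of R E) (j + 1)) :=
        ⟨fun x y => by rw [x.eq_zero_of_injective, y.eq_zero_of_injective]⟩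
      exact Module.Finite.of_finite

end localCohomology

section Artinian

variable {R : Type u} [CommRing R]

/-- A module in which every element is killed by a power of `x` is Artinian as soon as the
submodule of elements killed by `x` is. -/
lemma isArtinian_of_torsionBy {N : Type u} [AddCommGroup N] [Module R N] (x : R)
    (hN : ∀ n : N, ∃ k : ℕ, x ^ k • n = 0) [IsArtinian R (Submodule.torsionBy R N x)] :
    IsArtinian R N := by
  let T := Submodule.torsionBy R N x
  let D (k : ℕ) (B : Submodule R N) : Submodule R T :=
    (B.map (x ^ k • LinearMap.id)).comap T.subtype
  have memD (k : ℕ) (B : Submodule R N) (y : T) : y ∈ D k B ↔ ∃ b ∈ B, x ^ k • b = y := Iff.rfl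
  have D_mono (k : ℕ) {B C : Submodule R N} (h : B ≤ C) : D k B ≤ D k C :=
    Submodule.comap_mono (Submodule.map_mono h)
  have D_anti {k l : ℕ} (h : k ≤ l) (B : Submodule R N) : D l B ≤ D k B := by
    intro y hy
    obtain ⟨b, hb, hy⟩ := (memD _ _ _).1 hy
    refine (memD _ _ _).2 ⟨x ^ (l - k) • b, B.smul_mem _ hb, ?_⟩
    rw [← mul_smul, ← pow_add, Nat.add_sub_cancel' h, hy]
  have key {B C : Submodule R N} (hBC : B ≤ C) (h : ∀ k, D k C ≤ D k B) : C ≤ B := by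
    have h1 : ∀ k : ℕ, ∀ c ∈ C, x ^ k • c = 0 → c ∈ B := by
      intro k
      induction k with
      | zero =>
        intro c _ h0
        rw [pow_zero, one_smul] at h0
        exact h0 ▸ B.zero_mem
      | succ k ih =>
        intro c hc h0
        have hT : x ^ k • c ∈ T := by
          rw [Submodule.mem_torsionBy_iff, ← mul_smul, ← pow_succ', h0]
        obtain ⟨b, hb, hbc⟩ := (memD _ _ _).1 (h k ((memD k C ⟨_, hT⟩).2 ⟨c, hc, rfl⟩))
        have h2 := ih (c - b) (C.sub_mem hc (hBC hb)) (by
          rw [smul_sub, hbc, sub_self])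
        exact (B.sub_mem_iff_left hb).1 h2
    intro c hc
    obtain ⟨k, hk⟩ := hN c
    exact h1 k c hc hk
  refine monotone_stabilizes_iff_artinian.1 fun f => ?_
  have f_anti {m n : ℕ} (h : m ≤ n) : (f n).ofDual ≤ (f m).ofDual := f.monotone h
  obtain ⟨n₁, hn₁⟩ := IsArtinian.monotone_stabilizes (R := R) (M := T)
    ⟨fun n => OrderDual.toDual (D n (f n).ofDual), fun m n h =>
      OrderDual.toDual_le_toDual.2 ((D_anti h _).trans (D_mono _ (f_anti h)))⟩
  have hn₁' (m : ℕ) (h : n₁ ≤ m) : D n₁ (f n₁).ofDual = D m (f m).ofDual := hn₁ m h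
  have hcol (k : ℕ) : ∃ n, ∀ m, n ≤ m → D k (f n).ofDual = D k (f m).ofDual :=
    IsArtinian.monotone_stabilizes (R := R) (M := T)
      ⟨fun n => OrderDual.toDual (D k (f n).ofDual), fun m n h =>
        OrderDual.toDual_le_toDual.2 (D_mono _ (f_anti h))⟩
  choose c hc using hcol
  let n₀ := max n₁ ((Finset.range n₁).sup c)
  refine ⟨n₀, fun m hm => ?_⟩
  refine le_antisymm (f.monotone hm) (key (f_anti hm) fun k => ?_)
  by_cases hk : k < n₁
  · have h1 : c k ≤ n₀ := (Finset.le_sup (Finset.mem_range.2 hk)).trans (le_max_right _ _)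
    exact ((hc k n₀ h1).symm.trans (hc k m (h1.trans hm))).le
  · rw [not_lt] at hk
    have h1 : n₁ ≤ n₀ := le_max_left _ _
    have h2 : D k (f n₀).ofDual ≤ D n₁ (f n₁).ofDual := (D_anti hk _).trans (D_mono _ (f_anti h1))
    have h3 := hn₁' (max k m) (hk.trans (le_max_left _ _))
    exact h2.trans (h3.le.trans ((D_anti (le_max_left k m) _).trans
      (D_mono _ (f_anti (le_max_right k m)))))

/-- A torsion module with respect to a finitely generated ideal is Artinian as soon as the
submodule of elements killed by the ideal is. -/
lemma isArtinian_of_torsionBySet {N : Type u} [AddCommGroup N] [Module R N] {𝔟 : Ideal R}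
    (hb : 𝔟.FG) (hN : IsTorsionIdeal 𝔟 N)
    (hT : IsArtinian R (Submodule.torsionBySet R N 𝔟)) : IsArtinian R N := by
  classical
  obtain ⟨s, rfl⟩ := hb
  induction s using Finset.induction_on generalizing N with
  | empty =>
    have h1 : Submodule.torsionBySet R N ((Ideal.span ((∅ : Finset R) : Set R) : Ideal R) : Set R)
        = ⊤ := by
      rw [eq_top_iff]
      intro y _
      rw [Submodule.mem_torsionBySet_iff]
      rintro ⟨a, ha⟩
      have : a = 0 := by simpa using ha
      simp [this]
    rw [h1] at hT
    exact isArtinian_of_linearEquiv Submodule.topEquiv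
  | insert x s _ ih =>
    have hle : Ideal.span (s : Set R) ≤ Ideal.span ((insert x s : Finset R) : Set R) :=
      Ideal.span_mono (by simp)
    have hx : x ∈ Ideal.span ((insert x s : Finset R) : Set R) := Ideal.subset_span (by simp)
    have h1 : IsArtinian R (Submodule.torsionBy R N x) := by
      refine ih ?_ ?_
      · rintro ⟨y, hy⟩
        obtain ⟨n, hn⟩ := hN y
        exact ⟨n, fun a ha => Subtype.ext (hn a (Ideal.pow_right_mono hle n ha))⟩
      · let ι : Submodule.torsionBySet R (Submodule.torsionBy R N x)
            ((Ideal.span (s : Set R) : Ideal R) : Set R) →ₗ[R] Submodule.torsionBySet R N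
            ((Ideal.span ((insert x s : Finset R) : Set R) : Ideal R) : Set R) :=
          ((Submodule.torsionBy R N x).subtype ∘ₗ Submodule.subtype _).codRestrict _ (by
            intro y
            rw [Submodule.mem_torsionBySet_iff]
            rintro ⟨a, ha⟩
            have h2 : Ideal.span ((insert x s : Finset R) : Set R) ≤
                LinearMap.ker (LinearMap.toSpanSingleton R N (y : Submodule.torsionBy R N x)) := by
              refine Ideal.span_le.2 fun z hz => ?_
              rw [Finset.coe_insert] at hz
              rcases hz with rfl | hz
              · exact (Submodule.mem_torsionBy_iff _ _).1 y.1.2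
              · exact congrArg Subtype.val ((Submodule.mem_torsionBySet_iff _ _).1 y.2
                  ⟨z, Ideal.subset_span hz⟩)
            exact h2 ha)
        exact isArtinian_of_injective ι fun y z h =>
          Subtype.ext (Subtype.ext (Subtype.ext_iff.1 h :))
    refine isArtinian_of_torsionBy x fun n => ?_
    obtain ⟨k, hk⟩ := hN n
    exact ⟨k, hk _ (Ideal.pow_mem_pow hx k)⟩

/-- A finitely generated module over a Noetherian ring such that all primes containing its
annihilator are maximal is Artinian. -/
lemma isArtinian_of_forall_isMaximal [IsNoetherianRing R] {T : Type u} [AddCommGroup T]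
    [Module R T] [Module.Finite R T]
    (h : ∀ p : Ideal R, p.IsPrime → Module.annihilator R T ≤ p → p.IsMaximal) :
    IsArtinian R T := by
  let S := R ⧸ Module.annihilator R T
  have : Ring.KrullDimLE 0 S := by
    rw [Ring.krullDimLE_zero_iff]
    intro I hI
    have hI' : (I.comap (Ideal.Quotient.mk (Module.annihilator R T))).IsMaximal := by
      refine h _ (hI.comap _) fun a ha => ?_
      rw [Ideal.mem_comap, Ideal.Quotient.eq_zero_iff_mem.2 ha]
      exact I.zero_mem
    rw [← Ideal.map_comap_of_surjective _ Ideal.Quotient.mk_surjective I]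
    refine (Ideal.map_eq_top_or_isMaximal_of_surjective _ Ideal.Quotient.mk_surjective
      hI').resolve_left ?_
    rw [Ideal.map_comap_of_surjective _ Ideal.Quotient.mk_surjective I]
    exact hI.ne_top
  have : IsArtinianRing S := isArtinianRing_iff_krullDimLE_zero.2 this
  let _ : Module S T := Module.IsTorsionBySet.module (Module.isTorsionBySet_annihilator R T)
  have : IsScalarTower R S T := Module.IsTorsionBySet.isScalarTower _
  have : Module.Finite S T := Module.Finite.of_restrictScalars_finite R S T
  have : IsArtinian S T := isArtinian_of_fg_of_artinian'
  exact isArtinian_of_surjective_algebraMap (R := S) (S := R) Ideal.Quotient.mk_surjective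

/-- If the submodule killed by `𝔟` is finitely generated, then so is the one killed by a power
of `𝔟`. -/
lemma torsionBySet_pow_fg [IsNoetherianRing R] {N : Type u} [AddCommGroup N] [Module R N]
    {𝔟 : Ideal R} (hT : (Submodule.torsionBySet R N 𝔟).FG) (k : ℕ) :
    (Submodule.torsionBySet R N ↑(𝔟 ^ k)).FG := by
  induction k with
  | zero =>
    have : Submodule.torsionBySet R N ↑(𝔟 ^ 0) = ⊥ := by
      rw [eq_bot_iff]
      intro y hy
      simpa using (Submodule.mem_torsionBySet_iff _ _).1 hy ⟨1, by simp⟩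
    rw [this]
    exact Submodule.fg_bot
  | succ k ih =>
    obtain ⟨s, hs⟩ := (IsNoetherian.noetherian 𝔟 : 𝔟.FG)
    let T := Submodule.torsionBySet R N ↑(𝔟 ^ (k + 1))
    let T' := Submodule.torsionBySet R N ↑(𝔟 ^ k)
    have hsm (a : s) : (a : R) ∈ 𝔟 := hs ▸ Submodule.subset_span a.2
    let f (a : s) : T →ₗ[R] T' := ((a : R) • T.subtype).codRestrict T' (by
      intro y
      rw [Submodule.mem_torsionBySet_iff]
      rintro ⟨b, hb⟩
      have := (Submodule.mem_torsionBySet_iff _ _).1 y.2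
        ⟨b * a, by rw [pow_succ]; exact Ideal.mul_mem_mul hb (hsm a)⟩
      exact (mul_smul b (a : R) (y : N)).symm.trans this)
    let g : T →ₗ[R] (s → T') := LinearMap.pi f
    have : Module.Finite R T' := Module.Finite.iff_fg.2 ih
    have : Module.Finite R (Submodule.torsionBySet R N 𝔟) := Module.Finite.iff_fg.2 hT
    have hker : Module.Finite R (LinearMap.ker g) := by
      let ι : LinearMap.ker g →ₗ[R] Submodule.torsionBySet R N 𝔟 :=
        (T.subtype ∘ₗ (LinearMap.ker g).subtype).codRestrict _ (by
          intro y
          rw [Submodule.mem_torsionBySet_iff]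
          rintro ⟨a, ha⟩
          have h2 : 𝔟 ≤ LinearMap.ker (LinearMap.toSpanSingleton R N (y : T)) := by
            rw [← hs]
            refine Submodule.span_le.2 fun z hz => ?_
            exact congrArg Subtype.val (congrFun (LinearMap.mem_ker.1 y.2) ⟨z, hz⟩)
          exact h2 ha)
      exact Module.Finite.of_injective ι fun y z h =>
        Subtype.ext (Subtype.ext (Subtype.ext_iff.1 h :))
    have : Module.Finite R T := Module.Finite.of_exact_of_finite
      (f := (LinearMap.ker g).subtype) (g := g) (LinearMap.exact_subtype_ker_map g)
    exact Module.Finite.iff_fg.1 this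

/-- Multiplication by any element is surjective or nilpotent on a sup-irreducible Artinian
submodule. -/
lemma SupIrred.exists_pow_smul_eq_zero_or_le {N : Type u} [AddCommGroup N] [Module R N]
    [IsArtinian R N] {S : Submodule R N} (hS : SupIrred S) (x : R) :
    (∃ n : ℕ, ∀ y ∈ S, x ^ n • y = 0) ∨ S ≤ S.map (x • LinearMap.id) := by
  obtain ⟨n, hn⟩ := IsArtinian.range_smul_pow_stabilizes (R := R) S x
  have hn' (y : S) : ∃ z : S, x ^ (n + 1) • (x ^ n • z) = x ^ n • y := by
    have h1 : x ^ n • y ∈ LinearMap.range (x ^ n • LinearMap.id : S →ₗ[R] S) := ⟨y, rfl⟩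
    rw [hn (n + 1 + n) (by omega)] at h1
    obtain ⟨z, hz⟩ := h1
    refine ⟨z, ?_⟩
    rw [← mul_smul, ← pow_add]
    exact hz
  let S₁ := S ⊓ Submodule.torsionBy R N (x ^ n)
  let S₂ := S.map (x ^ (n + 1) • LinearMap.id)
  have h₂ : S₂ ≤ S := by
    rintro _ ⟨y, hy, rfl⟩
    exact S.smul_mem _ hy
  have h12 : S₁ ⊔ S₂ = S := by
    refine le_antisymm (sup_le inf_le_left h₂) fun y hy => ?_
    obtain ⟨z, hz⟩ := hn' ⟨y, hy⟩
    have hz' : x ^ (n + 1) • (x ^ n • (z : N)) = x ^ n • y := congrArg Subtype.val hz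
    rw [← sub_add_cancel y (x ^ (n + 1) • (z : N))]
    refine Submodule.add_mem_sup ⟨S.sub_mem hy (S.smul_mem _ z.2), ?_⟩ ⟨z, z.2, rfl⟩
    refine (Submodule.mem_torsionBy_iff _ _).2 ?_
    rw [smul_sub, ← hz', smul_comm, sub_self]
  rcases hS.2 h12 with h | h
  · left
    refine ⟨n, fun y hy => ?_⟩
    rw [← h] at hy
    exact (Submodule.mem_torsionBy_iff _ _).1 hy.2
  · right
    intro y hy
    rw [← h] at hy
    obtain ⟨z, hz, rfl⟩ := hy
    refine ⟨x ^ n • z, S.smul_mem _ hz, ?_⟩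
    simp only [LinearMap.smul_apply, LinearMap.id_apply]
    rw [pow_succ', mul_smul]

/-- The elements acting nilpotently on a sup-irreducible Artinian submodule form a prime ideal. -/
lemma SupIrred.isPrime_radical_annihilator {N : Type u} [AddCommGroup N] [Module R N]
    [IsArtinian R N] {S : Submodule R N} (hS : SupIrred S) :
    (Module.annihilator R S).radical.IsPrime := by
  have mem (x : R) : x ∈ (Module.annihilator R S).radical ↔
      ∃ n : ℕ, ∀ y ∈ S, x ^ n • y = 0 := by
    simp [Ideal.mem_radical_iff, Module.mem_annihilator, Subtype.ext_iff]
  refine ⟨fun h => hS.ne_bot ?_, fun {x y} hxy => ?_⟩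
  · obtain ⟨n, hn⟩ := (mem 1).1 (h ▸ Submodule.mem_top)
    rw [eq_bot_iff]
    intro z hz
    simpa using hn z hz
  · rw [mem, mem]
    refine (hS.exists_pow_smul_eq_zero_or_le x).imp_right fun h => ?_
    obtain ⟨n, hn⟩ := (mem _).1 hxy
    have hpow (k : ℕ) : ∀ z ∈ S, ∃ w ∈ S, x ^ k • w = z := by
      induction k with
      | zero => exact fun z hz => ⟨z, hz, by simp⟩
      | succ k ih =>
        intro z hz
        obtain ⟨w, hw, rfl⟩ := ih z hz
        obtain ⟨v, hv, rfl⟩ := h hw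
        exact ⟨v, hv, by simp [pow_succ, mul_smul]⟩
    refine ⟨n, fun z hz => ?_⟩
    obtain ⟨w, hw, rfl⟩ := hpow n z hz
    rw [← mul_smul, ← mul_pow, mul_comm, hn w hw]

/-- If the elements of an Artinian module killed by `𝔟` form a finitely generated submodule,
then multiplication by `x` has finitely generated cokernel for all `x` avoiding a certain
finite set of primes not containing `𝔟`. -/
lemma exists_finset_primes_of_isArtinian [IsNoetherianRing R] {N : Type u} [AddCommGroup N]
    [Module R N] [IsArtinian R N] {𝔟 : Ideal R} (hT : (Submodule.torsionBySet R N 𝔟).FG) :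
    ∃ Q : Finset (Ideal R), (∀ q ∈ Q, q.IsPrime ∧ ¬ 𝔟 ≤ q) ∧
      ∀ x : R, (∀ q ∈ Q, x ∉ q) →
        Module.Finite R (N ⧸ LinearMap.range (x • LinearMap.id : N →ₗ[R] N)) := by
  classical
  obtain ⟨s, hs, hs'⟩ := exists_supIrred_decomposition (⊤ : Submodule R N)
  refine ⟨(s.image fun S => (Module.annihilator R S).radical).filter fun q => ¬ 𝔟 ≤ q, ?_, ?_⟩
  · intro q hq
    rw [Finset.mem_filter, Finset.mem_image] at hq
    obtain ⟨⟨S, hS, rfl⟩, hq⟩ := hq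
    exact ⟨(hs' hS).isPrime_radical_annihilator, hq⟩
  · intro x hx
    let ρ := LinearMap.range (x • LinearMap.id : N →ₗ[R] N)
    have key : ∀ S ∈ s, (S.map ρ.mkQ).FG := by
      intro S hS
      by_cases hb : 𝔟 ≤ (Module.annihilator R S).radical
      · obtain ⟨n, hn⟩ := Ideal.exists_pow_le_of_le_radical_of_fg hb (IsNoetherian.noetherian 𝔟)
        refine Submodule.FG.map _ ?_
        have hle : S ≤ Submodule.torsionBySet R N ↑(𝔟 ^ n) := fun y hy =>
          (Submodule.mem_torsionBySet_iff _ _).2 fun a =>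
            congrArg Subtype.val (Module.mem_annihilator.1 (hn a.2) ⟨y, hy⟩)
        have : Module.Finite R (Submodule.torsionBySet R N ↑(𝔟 ^ n)) :=
          Module.Finite.iff_fg.2 (torsionBySet_pow_fg hT n)
        exact Module.Finite.iff_fg.1
          (Module.Finite.of_injective _ (Submodule.inclusion_injective hle))
      · have hxS := hx _ (Finset.mem_filter.2 ⟨Finset.mem_image_of_mem _ hS, hb⟩)
        have h1 := ((hs' hS).exists_pow_smul_eq_zero_or_le x).resolve_left fun ⟨n, hn⟩ => hxS
          ⟨n, Module.mem_annihilator.2 fun y => Subtype.ext (hn y y.2)⟩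
        have h2 : S.map ρ.mkQ = ⊥ := by
          rw [← LinearMap.le_ker_iff_map, Submodule.ker_mkQ]
          exact h1.trans (LinearMap.map_le_range)
        rw [h2]
        exact Submodule.fg_bot
    have h3 : (⊤ : Submodule R (N ⧸ ρ)) = s.sup fun S => S.map ρ.mkQ := by
      rw [← Submodule.range_mkQ ρ, ← Submodule.map_top, ← hs, Finset.sup_eq_iSup,
        Finset.sup_eq_iSup]
      simp only [Submodule.map_iSup, id]
    refine ⟨?_⟩
    rw [h3]
    exact Submodule.fg_finset_sup s _ key

end Artinian

section Support

variable {R : Type u} [CommRing R]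

/-- Over a Noetherian ring, a torsion module supported at maximal ideals, whose elements killed
by `𝔟` form a finitely generated submodule, has finitely generated cokernels for multiplication
by all `x` avoiding a certain finite set of primes not containing `𝔟`. -/
lemma exists_finset_primes_of_support [IsNoetherianRing R] {N : Type u} [AddCommGroup N]
    [Module R N] {𝔟 : Ideal R} (hN : IsTorsionIdeal 𝔟 N)
    (hs : ∀ p ∈ Module.support R N, p.asIdeal.IsMaximal)
    (hT : (Submodule.torsionBySet R N 𝔟).FG) :
    ∃ Q : Finset (Ideal R), (∀ q ∈ Q, q.IsPrime ∧ ¬ 𝔟 ≤ q) ∧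
      ∀ x : R, (∀ q ∈ Q, x ∉ q) →
        Module.Finite R (N ⧸ LinearMap.range (x • LinearMap.id : N →ₗ[R] N)) := by
  have : Module.Finite R (Submodule.torsionBySet R N 𝔟) := Module.Finite.iff_fg.2 hT
  have hA : IsArtinian R (Submodule.torsionBySet R N 𝔟) :=
    isArtinian_of_forall_isMaximal fun p hp hle =>
      hs ⟨p, hp⟩ (Module.support_subset_of_injective _ (Submodule.injective_subtype _)
        (Module.mem_support_iff_of_finite.2 hle))
  have : IsArtinian R N := isArtinian_of_torsionBySet (IsNoetherian.noetherian 𝔟) hN hA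
  exact exists_finset_primes_of_isArtinian hT

section Localization

variable {N : Type u} [AddCommGroup N] [Module R N] {p : Ideal R} [p.IsPrime]
  (Rp : Type u) [CommRing Rp] [Algebra R Rp]
  {Np : Type u} [AddCommGroup Np] [Module R Np] [Module Rp Np] [IsScalarTower R Rp Np]
  (f : N →ₗ[R] Np) [IsLocalizedModule p.primeCompl f]

include p f in
lemma IsTorsionIdeal.of_isLocalizedModule {𝔞 : Ideal R} (hN : IsTorsionIdeal 𝔞 N) :
    IsTorsionIdeal (𝔞.map (algebraMap R Rp)) Np := by
  intro z
  obtain ⟨⟨n, s⟩, rfl⟩ := IsLocalizedModule.mk'_surjective p.primeCompl f z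
  obtain ⟨k, hk⟩ := hN n
  refine ⟨k, ?_⟩
  rw [← Ideal.map_pow]
  change Ideal.map (algebraMap R Rp) (𝔞 ^ k) ≤
    LinearMap.ker (LinearMap.toSpanSingleton Rp Np (IsLocalizedModule.mk' f n s))
  refine Ideal.map_le_iff_le_comap.2 fun a ha => ?_
  change algebraMap R Rp a • IsLocalizedModule.mk' f n s = 0
  rw [algebraMap_smul, ← IsLocalizedModule.mk'_smul, hk a ha, IsLocalizedModule.mk'_zero]

variable (p) in
include f in
lemma comap_mem_support_of_isLocalizedModule {q : PrimeSpectrum Rp}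
    [IsLocalization.AtPrime Rp p] (hq : q ∈ Module.support Rp Np) :
    q.comap (algebraMap R Rp) ∈ Module.support R N := by
  rw [Module.mem_support_iff'] at hq ⊢
  obtain ⟨z, hz⟩ := hq
  obtain ⟨⟨n, s⟩, rfl⟩ := IsLocalizedModule.mk'_surjective p.primeCompl f z
  refine ⟨n, fun r hr h0 => hz (algebraMap R Rp r) hr ?_⟩
  change algebraMap R Rp r • IsLocalizedModule.mk' f n s = 0
  rw [algebraMap_smul, ← IsLocalizedModule.mk'_smul, h0, IsLocalizedModule.mk'_zero]

include p f in
lemma torsionBySet_fg_of_isLocalizedModule [IsNoetherianRing R] [IsNoetherianRing Rp]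
    [IsLocalization.AtPrime Rp p] {𝔞 : Ideal R} (hT : (Submodule.torsionBySet R N 𝔞).FG) :
    (Submodule.torsionBySet Rp Np (𝔞.map (algebraMap R Rp))).FG := by
  let T := Submodule.torsionBySet R N 𝔞
  have h1 : (T.localized' Rp p.primeCompl f).FG := by
    rw [Submodule.localized'_eq_span]
    obtain ⟨s, hs⟩ := hT
    have h2 : (f '' T : Set Np) ⊆ Submodule.span Rp (f '' (s : Set N)) := by
      rintro _ ⟨n, hn, rfl⟩
      have h3 : n ∈ Submodule.span R (s : Set N) := hs ▸ hn
      have h4 : f n ∈ Submodule.span R (f '' (s : Set N)) := by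
        rw [Submodule.span_image]
        exact ⟨n, h3, rfl⟩
      exact Submodule.span_le_restrictScalars R Rp _ h4
    have h5 : Submodule.span Rp (f '' (T : Set N)) = Submodule.span Rp (f '' (s : Set N)) := by
      refine le_antisymm (Submodule.span_le.2 h2) (Submodule.span_mono (Set.image_mono ?_))
      exact Submodule.span_le.1 hs.le
    rw [h5]
    exact Submodule.fg_span (s.finite_toSet.image f)
  have h6 : Submodule.torsionBySet Rp Np (𝔞.map (algebraMap R Rp)) ≤
      T.localized' Rp p.primeCompl f := by
    intro z hz
    obtain ⟨⟨n, s⟩, rfl⟩ := IsLocalizedModule.mk'_surjective p.primeCompl f z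
    obtain ⟨t, ht⟩ := (IsNoetherian.noetherian 𝔞 : 𝔞.FG)
    have h7 (a : t) : ∃ c : p.primeCompl, c • (a : R) • n = 0 := by
      have ha : (a : R) ∈ 𝔞 := ht ▸ Submodule.subset_span a.2
      have h8 : (a : R) • IsLocalizedModule.mk' f n s = 0 := by
        rw [← algebraMap_smul Rp]
        exact (Submodule.mem_torsionBySet_iff _ _).1 hz
          ⟨_, Ideal.mem_map_of_mem (algebraMap R Rp) ha⟩
      rw [← IsLocalizedModule.mk'_smul] at h8
      exact (IsLocalizedModule.mk'_eq_zero' _ _).1 h8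
    choose c hc using h7
    let C := ∏ a, c a
    have hCn : C • n ∈ T := by
      refine (Submodule.mem_torsionBySet_iff _ _).2 fun a => ?_
      have h9 : 𝔞 ≤ LinearMap.ker (LinearMap.toSpanSingleton R N (C • n)) := by
        rw [← ht]
        refine Submodule.span_le.2 fun a ha => ?_
        change a • C • n = 0
        obtain ⟨d, hd⟩ := Finset.dvd_prod_of_mem c (Finset.mem_univ ⟨a, ha⟩)
        rw [smul_comm, show C = c ⟨a, ha⟩ * d from hd, mul_comm, mul_smul, hc, smul_zero]
      exact h9 a.2
    exact ⟨_, hCn, C * s, IsLocalizedModule.mk'_cancel_left _ _ _ _⟩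
  have : Module.Finite Rp (T.localized' Rp p.primeCompl f) := Module.Finite.iff_fg.2 h1
  exact Module.Finite.iff_fg.1
    (Module.Finite.of_injective _ (Submodule.inclusion_injective h6))

include f in
/-- A finitely generated submodule of `N` realizing finite generation of `N / xN` at `p`. -/
lemma exists_fg_notMem_support_of_isLocalizedModule [IsLocalization.AtPrime Rp p] (x : R)
    (hx : Module.Finite Rp
      (Np ⧸ LinearMap.range (algebraMap R Rp x • LinearMap.id : Np →ₗ[Rp] Np))) :
    ∃ L : Submodule R N, L.FG ∧ (⟨p, ‹_›⟩ : PrimeSpectrum R) ∉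
      Module.support R (N ⧸ (L ⊔ LinearMap.range (x • LinearMap.id : N →ₗ[R] N))) := by
  classical
  let ρ := LinearMap.range (algebraMap R Rp x • LinearMap.id : Np →ₗ[Rp] Np)
  obtain ⟨s, hs⟩ := Module.Finite.fg_top (R := Rp) (M := Np ⧸ ρ)
  have hlift (y : Np ⧸ ρ) : ∃ (n : N) (t : p.primeCompl),
      ρ.mkQ (IsLocalizedModule.mk' f n t) = y := by
    obtain ⟨z, rfl⟩ := ρ.mkQ_surjective y
    obtain ⟨⟨n, t⟩, rfl⟩ := IsLocalizedModule.mk'_surjective p.primeCompl f z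
    exact ⟨n, t, rfl⟩
  choose num den hnum using hlift
  let L := Submodule.span R (num '' (s : Set (Np ⧸ ρ)))
  let P := L ⊔ LinearMap.range (x • LinearMap.id : N →ₗ[R] N)
  refine ⟨L, Submodule.fg_span (s.finite_toSet.image _), ?_⟩
  have hρ : ρ ≤ P.localized' Rp p.primeCompl f := by
    rintro _ ⟨z, rfl⟩
    obtain ⟨⟨n, t⟩, rfl⟩ := IsLocalizedModule.mk'_surjective p.primeCompl f z
    refine ⟨x • n, Submodule.mem_sup_right ⟨n, rfl⟩, t, ?_⟩
    rw [IsLocalizedModule.mk'_smul, ← algebraMap_smul Rp]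
    rfl
  have htop : P.localized' Rp p.primeCompl f = ⊤ := by
    have h1 : (P.localized' Rp p.primeCompl f).map ρ.mkQ = ⊤ := by
      rw [eq_top_iff, ← hs]
      refine Submodule.span_le.2 fun y hy => ?_
      exact ⟨_, ⟨num y, Submodule.mem_sup_left (Submodule.subset_span ⟨y, hy, rfl⟩), den y, rfl⟩,
        hnum y⟩
    have h2 := congrArg (Submodule.comap ρ.mkQ) h1
    rwa [Submodule.comap_map_mkQ, Submodule.comap_top, sup_eq_right.2 hρ] at h2
  rw [Module.notMem_support_iff']
  intro y
  obtain ⟨v, rfl⟩ := Submodule.mkQ_surjective _ y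
  obtain ⟨m, hm, t, hmt⟩ := (htop ▸ Submodule.mem_top : f v ∈ P.localized' Rp p.primeCompl f)
  rw [IsLocalizedModule.mk'_eq_iff, Submonoid.smul_def, ← map_smul,
    IsLocalizedModule.eq_iff_exists p.primeCompl] at hmt
  obtain ⟨c, hc⟩ := hmt
  refine ⟨(c : R) * t, (c * t).2, ?_⟩
  rw [← map_smul]
  refine (Submodule.Quotient.mk_eq_zero _).2 ?_
  rw [mul_smul]
  exact (show (c : R) • m = (c : R) • (t : R) • v from hc) ▸ P.smul_mem _ hm

end Localization

lemma exists_finset_primes_of_minimal [IsNoetherianRing R] {N : Type u} [AddCommGroup N]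
    [Module R N] {𝔞 : Ideal R} (hN : IsTorsionIdeal 𝔞 N)
    (hT : (Submodule.torsionBySet R N 𝔞).FG) (p : PrimeSpectrum R)
    (hp : ∀ q ∈ Module.support R N, q ≤ p → q = p) :
    ∃ Q : Finset (Ideal R), (∀ q ∈ Q, q.IsPrime ∧ ¬ 𝔞 ≤ q) ∧
      ∀ x : R, (∀ q ∈ Q, x ∉ q) → ∃ L : Submodule R N, L.FG ∧
        p ∉ Module.support R (N ⧸ (L ⊔ LinearMap.range (x • LinearMap.id : N →ₗ[R] N))) := by
  classical
  let Rp := Localization.AtPrime p.asIdeal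
  let f := LocalizedModule.mkLinearMap p.asIdeal.primeCompl N
  have hs (q : PrimeSpectrum Rp)
      (hq : q ∈ Module.support Rp (LocalizedModule p.asIdeal.primeCompl N)) :
      q.asIdeal.IsMaximal := by
    have h1 := comap_mem_support_of_isLocalizedModule p.asIdeal Rp f hq
    have hle : q.comap (algebraMap R Rp) ≤ p := by
      have h2 := IsLocalRing.le_maximalIdeal q.isPrime.ne_top
      have h3 := Ideal.comap_mono (f := algebraMap R Rp) h2
      exact h3.trans (Localization.AtPrime.under_maximalIdeal (I := p.asIdeal)).le
    have h4 := congrArg PrimeSpectrum.asIdeal (hp _ h1 hle)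
    rw [Localization.AtPrime.eq_maximalIdeal_iff_under_eq.1 h4]
    infer_instance
  obtain ⟨Q, hQ, hQ'⟩ := exists_finset_primes_of_support
    (IsTorsionIdeal.of_isLocalizedModule (p := p.asIdeal) Rp f hN) hs
    (torsionBySet_fg_of_isLocalizedModule (p := p.asIdeal) Rp f hT)
  refine ⟨Q.image (Ideal.comap (algebraMap R Rp)), ?_, fun x hx => ?_⟩
  · intro q hq
    obtain ⟨q', hq', rfl⟩ := Finset.mem_image.1 hq
    have := (hQ q' hq').1
    exact ⟨Ideal.comap_isPrime _ _, fun h => (hQ q' hq').2 (Ideal.map_le_iff_le_comap.2 h)⟩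
  · exact exists_fg_notMem_support_of_isLocalizedModule Rp f x
      (hQ' _ fun q hq hxq => hx _ (Finset.mem_image_of_mem _ hq) hxq)

end Support

section Cofinite

variable {R : Type u} [CommRing R]

lemma IsTorsionIdeal.support_subset {𝔞 : Ideal R} {N : Type u} [AddCommGroup N] [Module R N]
    (hN : IsTorsionIdeal 𝔞 N) :
    Module.support R N ⊆ PrimeSpectrum.zeroLocus
      (Module.annihilator R (Submodule.torsionBySet R N 𝔞) : Set R) := by
  intro p hp s hs
  obtain ⟨m, hm⟩ := Module.mem_support_iff_exists_annihilator.1 hp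
  have key (k : ℕ) : ∀ m : N, (∀ a ∈ 𝔞 ^ k, a • m = 0) → s ^ k • m = 0 := by
    induction k with
    | zero => exact fun m hm => by simpa using hm 1 (by simp)
    | succ k ih =>
      intro m hm
      have h1 : s ^ k • m ∈ Submodule.torsionBySet R N 𝔞 := by
        refine (Submodule.mem_torsionBySet_iff _ _).2 fun a => ?_
        change (a : R) • s ^ k • m = 0
        rw [smul_comm]
        refine ih _ fun b hb => ?_
        rw [smul_smul]
        exact hm _ (pow_succ 𝔞 k ▸ Ideal.mul_mem_mul hb a.2)
      have h2 := congrArg Subtype.val (Module.mem_annihilator.1 hs ⟨_, h1⟩)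
      rw [pow_succ', mul_smul]
      exact h2
  obtain ⟨k, hk⟩ := hN m
  refine p.isPrime.mem_of_pow_mem k (hm ?_)
  exact (Submodule.mem_annihilator_span_singleton _ _).2 (key k m hk)

lemma IsTorsionIdeal.support_subset_zeroLocus {𝔞 : Ideal R} {N : Type u} [AddCommGroup N]
    [Module R N] (hN : IsTorsionIdeal 𝔞 N) :
    Module.support R N ⊆ PrimeSpectrum.zeroLocus (𝔞 : Set R) := by
  refine hN.support_subset.trans (PrimeSpectrum.zeroLocus_anti_mono fun a ha => ?_)
  refine Module.mem_annihilator.2 fun y => Subtype.ext ?_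
  exact (Submodule.mem_torsionBySet_iff _ _).1 y.2 ⟨a, ha⟩

lemma eq_of_le_of_moduleDim_le_one {N : Type u} [AddCommGroup N] [Module R N]
    (hdim : moduleDim R N ≤ 1) {q p : PrimeSpectrum R} (hq : q ∈ Module.support R N)
    (hp : ¬ p.asIdeal.IsMaximal) (hqp : q ≤ p) : q = p := by
  obtain ⟨m, hm, hpm⟩ := Ideal.exists_le_maximal p.asIdeal p.isPrime.ne_top
  let m' : PrimeSpectrum R := ⟨m, hm.isPrime⟩
  have hps := Module.mem_support_mono hqp hq
  have hms : m' ∈ Module.support R N := Module.mem_support_mono hpm hps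
  rcases Order.krullDim_le_one_iff.1 hdim ⟨p, hps⟩ with h | h
  · exact le_antisymm hqp (h (b := ⟨q, hq⟩) hqp)
  · have h1 : p = m' := le_antisymm hpm (h (b := ⟨m', hms⟩) hpm)
    exact absurd (h1 ▸ hm) hp

lemma finite_nonmaximal_support [IsNoetherianRing R] {𝔞 : Ideal R} {N : Type u} [AddCommGroup N]
    [Module R N] (hN : IsTorsionIdeal 𝔞 N) (hT : (Submodule.torsionBySet R N 𝔞).FG)
    (hdim : moduleDim R N ≤ 1) :
    {p ∈ Module.support R N | ¬ p.asIdeal.IsMaximal}.Finite := by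
  let T := Submodule.torsionBySet R N 𝔞
  have : Module.Finite R T := Module.Finite.iff_fg.2 hT
  refine Set.Finite.subset (((Module.annihilator R T).finite_minimalPrimes_of_isNoetherianRing
    R).preimage (f := PrimeSpectrum.asIdeal) fun p _ q _ h => PrimeSpectrum.ext h) ?_
  rintro p ⟨hp, hp'⟩
  obtain ⟨q, hq, hqp⟩ := Ideal.exists_minimalPrimes_le (J := p.asIdeal) (hN.support_subset hp)
  have hqs : (⟨q, hq.1.1⟩ : PrimeSpectrum R) ∈ Module.support R N :=
    Module.support_subset_of_injective _ T.injective_subtype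
      (Module.mem_support_iff_of_finite.2 hq.1.2)
  rw [Set.mem_preimage, ← eq_of_le_of_moduleDim_le_one hdim hqs hp' hqp]
  exact hq

section Induction

variable [IsNoetherianRing R] {𝔞 : Ideal R}

omit [IsNoetherianRing R] in
lemma exists_mem_forall_notMem (I : Ideal R) (hI : ¬ 𝔞 ≤ I) (Q : Finset (Ideal R))
    (hQ : ∀ q ∈ Q, q.IsPrime ∧ ¬ 𝔞 ≤ q) : ∃ x ∈ 𝔞, x ∉ I ∧ ∀ q ∈ Q, x ∉ q := by
  classical
  by_contra! h
  obtain ⟨q, hq, hq'⟩ := (Ideal.subset_union_prime (s := insert I Q) (f := id) (I := 𝔞) I I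
    fun q hq hq' _ => (hQ q ((Finset.mem_insert.1 hq).resolve_left hq')).1).1 fun x hx => by
      by_cases hxI : x ∈ I
      · exact Set.mem_biUnion (Finset.mem_coe.2 (Finset.mem_insert_self I Q)) hxI
      · obtain ⟨q, hq, hxq⟩ := h x hx hxI
        exact Set.mem_biUnion (Finset.mem_coe.2 (Finset.mem_insert_of_mem hq)) hxq
  rcases Finset.mem_insert.1 hq with rfl | hq
  · exact hI hq'
  · exact (hQ q hq).2 hq'

/-- Finiteness of `Ext^j(R/𝔞, N)` by Noetherian induction on the annihilator of `N`. -/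
lemma extFinite_of_forall_ker_coker
    {P : ∀ (N : Type u) [AddCommGroup N] [Module R N], Prop}
    (h0 : ∀ (N : Type u) [AddCommGroup N] [Module R N], P N →
      ExtFinite (ModuleCat.of R (R ⧸ 𝔞)) 0 N)
    (h : ∀ (N : Type u) [AddCommGroup N] [Module R N], P N →
      ∃ Q : Finset (Ideal R), (∀ q ∈ Q, q.IsPrime ∧ ¬ 𝔞 ≤ q) ∧
        ∀ x ∈ 𝔞, (∀ q ∈ Q, x ∉ q) →
          P (LinearMap.ker (x • LinearMap.id : N →ₗ[R] N)) ∧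
          ((∀ j, ExtFinite (ModuleCat.of R (R ⧸ 𝔞)) j
            (LinearMap.ker (x • LinearMap.id : N →ₗ[R] N))) →
          ∀ j, ExtFinite (ModuleCat.of R (R ⧸ 𝔞)) j
            (N ⧸ LinearMap.range (x • LinearMap.id : N →ₗ[R] N))))
    {N : Type u} [AddCommGroup N] [Module R N] (hN : P N) (j : ℕ) :
    ExtFinite (ModuleCat.of R (R ⧸ 𝔞)) j N := by
  obtain ⟨I, hI⟩ : ∃ I, I = Module.annihilator R N := ⟨_, rfl⟩
  induction I using WellFoundedGT.induction generalizing N j with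
  | ind I ih =>
    by_cases hle : 𝔞 ≤ I
    · have h1 : Submodule.torsionBySet R N 𝔞 = ⊤ := eq_top_iff.2 fun y _ =>
        (Submodule.mem_torsionBySet_iff _ _).2 fun a =>
          Module.mem_annihilator.1 (hI ▸ hle a.2) y
      have : Module.Finite R N := ⟨h1 ▸ (extFinite_zero_iff 𝔞).1 (h0 N hN)⟩
      exact ExtFinite.of_finite
    · obtain ⟨Q, hQ, hQ'⟩ := h N hN
      obtain ⟨x, hx, hxI, hxQ⟩ := exists_mem_forall_notMem I hle Q hQ
      obtain ⟨hK, hC⟩ := hQ' x hx hxQ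
      have hK' (j) := by
        refine ih _ (lt_of_le_of_ne ?_ fun heq => hxI ?_) hK j rfl
        · rw [hI]
          exact LinearMap.annihilator_le_of_injective _ (Submodule.injective_subtype _)
        · rw [heq]
          exact Module.mem_annihilator.2 fun y => Subtype.ext y.2
      refine ExtFinite.of_ker_coker (x • LinearMap.id) (fun j => ?_) hK' (hC hK') j
      rw [extPost_smul_id]
      exact LinearMap.ext fun y => smul_ext_eq_zero 𝔞 hx _ j y

/-- A torsion module supported at maximal ideals is cofinite if its socle is finitely
generated. -/
lemma extFinite_of_support_isMaximal {N : Type u} [AddCommGroup N] [Module R N]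
    (hN : IsTorsionIdeal 𝔞 N) (hs : ∀ p ∈ Module.support R N, p.asIdeal.IsMaximal)
    (h0 : ExtFinite (ModuleCat.of R (R ⧸ 𝔞)) 0 N) (j : ℕ) :
    ExtFinite (ModuleCat.of R (R ⧸ 𝔞)) j N := by
  refine extFinite_of_forall_ker_coker (P := fun N _ _ => IsTorsionIdeal 𝔞 N ∧
    (∀ p ∈ Module.support R N, p.asIdeal.IsMaximal) ∧
    ExtFinite (ModuleCat.of R (R ⧸ 𝔞)) 0 N) (fun N _ _ h => h.2.2) ?_ ⟨hN, hs, h0⟩ j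
  rintro N _ _ ⟨hN, hs, h0⟩
  obtain ⟨Q, hQ, hQ'⟩ := exists_finset_primes_of_support hN hs ((extFinite_zero_iff 𝔞).1 h0)
  refine ⟨Q, hQ, fun x _ hx => ⟨?_, fun _ j => ?_⟩⟩
  · have hi := Submodule.injective_subtype (LinearMap.ker (x • LinearMap.id : N →ₗ[R] N))
    exact ⟨hN.of_injective _ hi, fun p hp => hs p (Module.support_subset_of_injective _ hi hp),
      ExtFinite.left_zero hi h0⟩
  · have := hQ' x hx
    exact ExtFinite.of_finite

omit [IsNoetherianRing R] in
lemma moduleDim_le_of_injective {A B : Type u} [AddCommGroup A] [Module R A] [AddCommGroup B]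
    [Module R B] (f : A →ₗ[R] B) (hf : Function.Injective f) : moduleDim R A ≤ moduleDim R B :=
  Order.krullDim_le_of_strictMono (Set.inclusion (Module.support_subset_of_injective f hf))
    fun _ _ h => h

/-- A torsion module of dimension at most one is cofinite as soon as `Ext⁰(R/𝔞, N)` and
`Ext¹(R/𝔞, N)` are finitely generated. -/
lemma extFinite_of_moduleDim_le_one {N : Type u} [AddCommGroup N] [Module R N]
    (hN : IsTorsionIdeal 𝔞 N) (hdim : moduleDim R N ≤ 1)
    (h0 : ExtFinite (ModuleCat.of R (R ⧸ 𝔞)) 0 N)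
    (h1 : ExtFinite (ModuleCat.of R (R ⧸ 𝔞)) 1 N) (j : ℕ) :
    ExtFinite (ModuleCat.of R (R ⧸ 𝔞)) j N := by
  classical
  let P (N : Type u) [AddCommGroup N] [Module R N] : Prop := IsTorsionIdeal 𝔞 N ∧
    moduleDim R N ≤ 1 ∧ ExtFinite (ModuleCat.of R (R ⧸ 𝔞)) 0 N ∧
    ExtFinite (ModuleCat.of R (R ⧸ 𝔞)) 1 N
  have hP : P N := ⟨hN, hdim, h0, h1⟩
  refine extFinite_of_forall_ker_coker (P := P) (fun N _ _ h => h.2.2.1) ?_ hP j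
  rintro N _ _ ⟨hN, hdim, h0, h1⟩
  have hT := (extFinite_zero_iff 𝔞).1 h0
  have hfin := finite_nonmaximal_support hN hT hdim
  have hmin (p : PrimeSpectrum R) (hp : ¬ p.asIdeal.IsMaximal) :=
    exists_finset_primes_of_minimal hN hT p
      (fun q hq hqp => eq_of_le_of_moduleDim_le_one hdim hq hp hqp)
  choose! Q hQ hQ' using hmin
  refine ⟨hfin.toFinset.biUnion Q, fun q hq => ?_, fun x hx hxQ => ?_⟩
  · obtain ⟨p, hp, hq⟩ := Finset.mem_biUnion.1 hq
    exact hQ p ((Set.Finite.mem_toFinset _).1 hp).2 q hq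
  let g : N →ₗ[R] N := x • LinearMap.id
  have exK : Function.Exact (LinearMap.ker g).subtype g.rangeRestrict := by
    rw [LinearMap.exact_iff, LinearMap.ker_rangeRestrict, Submodule.range_subtype]
  have hiK := (LinearMap.ker g).injective_subtype
  have hsK := g.surjective_rangeRestrict
  have exC : Function.Exact (LinearMap.range g).subtype (LinearMap.range g).mkQ :=
    LinearMap.exact_subtype_mkQ _
  have hiC := (LinearMap.range g).injective_subtype
  have hsC := (LinearMap.range g).mkQ_surjective
  refine ⟨⟨hN.of_injective _ hiK, (moduleDim_le_of_injective _ hiK).trans hdim,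
    ExtFinite.left_zero hiK h0,
    ExtFinite.left exK hiK hsK (ExtFinite.left_zero hiC h0) h1⟩, fun hK j => ?_⟩
  have hC0 : ExtFinite (ModuleCat.of R (R ⧸ 𝔞)) 0 (N ⧸ LinearMap.range g) :=
    ExtFinite.right exC hiC hsC h0 (ExtFinite.right exK hiK hsK h1 (hK 2))
  have hL (p : PrimeSpectrum R) (hp : p ∈ hfin.toFinset) :=
    hQ' p ((Set.Finite.mem_toFinset _).1 hp).2 x
      fun q hq => hxQ q (Finset.mem_biUnion.2 ⟨p, hp, hq⟩)
  choose! L hL hL' using hL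
  let S := (⨆ p ∈ hfin.toFinset, L p).map (LinearMap.range g).mkQ
  have hS : Module.Finite R S :=
    Module.Finite.iff_fg.2 ((Submodule.fg_biSup hfin.toFinset L hL).map _)
  have exS : Function.Exact S.subtype S.mkQ := LinearMap.exact_subtype_mkQ _
  have hsD : Function.Surjective (S.mkQ ∘ₗ (LinearMap.range g).mkQ) :=
    S.mkQ_surjective.comp hsC
  have hD (p : PrimeSpectrum R) (hp : p ∈ Module.support R ((N ⧸ LinearMap.range g) ⧸ S)) :
      p.asIdeal.IsMaximal := by
    by_contra hpm
    have hpf : p ∈ hfin.toFinset := (Set.Finite.mem_toFinset _).2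
      ⟨Module.support_subset_of_surjective _ hsD hp, hpm⟩
    refine hL' p hpf (Module.support_subset_of_surjective (Submodule.liftQ _
      (S.mkQ ∘ₗ (LinearMap.range g).mkQ) (sup_le ?_ ?_)) ?_ hp)
    · intro y hy
      exact (Submodule.Quotient.mk_eq_zero _).2
        ⟨y, Submodule.mem_iSup_of_mem p (Submodule.mem_iSup_of_mem hpf hy), rfl⟩
    · rintro _ ⟨y, rfl⟩
      have h2 : (LinearMap.range g).mkQ (g y) = 0 :=
        (Submodule.Quotient.mk_eq_zero _).2 ⟨y, rfl⟩
      exact (congrArg S.mkQ h2).trans (map_zero _)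
    · intro y
      obtain ⟨z, rfl⟩ := hsD y
      exact ⟨Submodule.Quotient.mk z, rfl⟩
  exact ExtFinite.middle exS S.injective_subtype S.mkQ_surjective ExtFinite.of_finite
    (extFinite_of_support_isMaximal (hN.of_surjective _ hsD) hD
      (ExtFinite.right exS S.injective_subtype S.mkQ_surjective hC0 ExtFinite.of_finite) j)

/-- A torsion module in `FD_{≤1}` is cofinite as soon as `Ext⁰(R/𝔞, N)` and
`Ext¹(R/𝔞, N)` are finitely generated. -/
lemma MemFD.extFinite {N : Type u} [AddCommGroup N] [Module R N] (hFD : MemFD R 1 N)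
    (hN : IsTorsionIdeal 𝔞 N) (h0 : ExtFinite (ModuleCat.of R (R ⧸ 𝔞)) 0 N)
    (h1 : ExtFinite (ModuleCat.of R (R ⧸ 𝔞)) 1 N) (j : ℕ) :
    ExtFinite (ModuleCat.of R (R ⧸ 𝔞)) j N := by
  obtain ⟨S, hS, hdim⟩ := hFD
  have : Module.Finite R S := Module.Finite.iff_fg.2 hS
  have exS : Function.Exact S.subtype S.mkQ := LinearMap.exact_subtype_mkQ _
  have hr {j : ℕ} (hj : ExtFinite (ModuleCat.of R (R ⧸ 𝔞)) j N) :=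
    ExtFinite.right exS S.injective_subtype S.mkQ_surjective hj ExtFinite.of_finite
  exact ExtFinite.middle exS S.injective_subtype S.mkQ_surjective ExtFinite.of_finite
    (extFinite_of_moduleDim_le_one (hN.of_surjective _ S.mkQ_surjective) (by exact_mod_cast hdim)
      (hr h0) (hr h1) j)

omit [IsNoetherianRing R] in
lemma MemFD.of_equiv {A B : Type u} [AddCommGroup A] [Module R A] [AddCommGroup B]
    [Module R B] (e : A ≃ₗ[R] B) {n : ℕ} (hA : MemFD R n A) : MemFD R n B := by
  obtain ⟨S, hS, hdim⟩ := hA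
  let e' := Submodule.Quotient.equiv S (S.map e.toLinearMap) e rfl
  exact ⟨S.map e.toLinearMap, hS.map _,
    (moduleDim_le_of_injective e'.symm.toLinearMap e'.symm.injective).trans hdim⟩

omit [IsNoetherianRing R] in
lemma MemFD.of_moduleDim_le {A : Type u} [AddCommGroup A] [Module R A] {n : ℕ}
    (hA : moduleDim R A ≤ n) : MemFD R n A := by
  let e := Submodule.quotEquivOfEqBot (⊥ : Submodule R A) rfl
  exact ⟨⊥, Submodule.fg_bot, (moduleDim_le_of_injective e.toLinearMap e.injective).trans hA⟩

/-- A torsion module with finitely generated socle over a ring of dimension at most `n + 1`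
lies in `FD_{≤n}`. -/
lemma MemFD.of_ringKrullDim_le {n : ℕ} (hR : ringKrullDim R ≤ n + 1) {N : Type u}
    [AddCommGroup N] [Module R N] (hN : IsTorsionIdeal 𝔞 N)
    (hT : (Submodule.torsionBySet R N 𝔞).FG) : MemFD R n N := by
  classical
  have hfin := (⊥ : Ideal R).finite_minimalPrimes_of_isNoetherianRing R
  let J : Ideal R := (hfin.toFinset.filter (¬ 𝔞 ≤ ·)).inf id
  have hJ : 𝔞 * J ≤ (⊥ : Ideal R).radical := by
    rw [← Ideal.sInf_minimalPrimes]
    refine le_sInf fun p hp => ?_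
    by_cases h : 𝔞 ≤ p
    · exact Ideal.mul_le_left.trans h
    · exact Ideal.mul_le_right.trans
        (Finset.inf_le (f := id) (Finset.mem_filter.2 ⟨hfin.mem_toFinset.2 hp, h⟩))
  obtain ⟨k, hk⟩ := (⊥ : Ideal R).exists_radical_pow_le_of_fg (IsNoetherian.noetherian _)
  have hk' : 𝔞 ^ k * J ^ k ≤ ⊥ := by
    rw [← mul_pow]
    exact (Ideal.pow_right_mono hJ k).trans hk
  let S := Submodule.torsionBySet R N ↑(𝔞 ^ k)
  refine ⟨S, torsionBySet_pow_fg hT k, ?_⟩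
  have hmin (q : PrimeSpectrum R) (hq : q ∈ Module.support R (N ⧸ S)) :
      q.asIdeal ∉ (⊥ : Ideal R).minimalPrimes := by
    intro hqm
    have h1 : 𝔞 ≤ q.asIdeal := (hN.of_surjective _ S.mkQ_surjective).support_subset_zeroLocus hq
    have h2 : J ^ k ≤ q.asIdeal := by
      refine le_trans (fun b hb => Module.mem_annihilator.2 fun y => ?_)
        (Module.annihilator_le_of_mem_support hq)
      obtain ⟨y, rfl⟩ := S.mkQ_surjective y
      rw [← map_smul]
      refine (Submodule.Quotient.mk_eq_zero _).2
        ((Submodule.mem_torsionBySet_iff _ _).2 fun a => ?_)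
      have h3 : (a : R) * b = 0 := hk' (Ideal.mul_mem_mul a.2 hb)
      rw [smul_smul, h3, zero_smul]
    obtain ⟨p, hp, hpq⟩ := q.isPrime.inf_le'.1 (q.isPrime.le_of_pow_le h2)
    obtain ⟨hp, hap⟩ := Finset.mem_filter.1 hp
    exact hap (h1.trans (hqm.2 (hfin.mem_toFinset.1 hp).1 hpq))
  refine iSup_le fun s => ?_
  obtain ⟨q, hq, hle⟩ := Ideal.exists_minimalPrimes_le (I := ⊥) (J := s.head.1.asIdeal) bot_le
  have hlt : (⟨q, hq.1.1⟩ : PrimeSpectrum R) < s.head.1 :=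
    lt_of_le_of_ne hle fun h => hmin _ s.head.2 (h ▸ hq)
  let s' : LTSeries (PrimeSpectrum R) := s.map Subtype.val fun _ _ h => h
  have h3 := (Order.LTSeries.length_le_krullDim (s'.cons ⟨q, hq.1.1⟩ hlt)).trans hR
  have h4 : ((s.length + 1 : ℕ) : WithBot ℕ∞) ≤ ((n + 1 : ℕ) : WithBot ℕ∞) := by
    have hlen : (s'.cons ⟨q, hq.1.1⟩ hlt).length = s.length + 1 :=
      RelSeries.cons_length s' _ hlt
    rw [← hlen]
    exact_mod_cast h3
  exact_mod_cast Nat.le_of_succ_le_succ (by exact_mod_cast h4)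

end Induction
end Cofinite

namespace localCohomology

variable {R : Type u} [CommRing R] [IsNoetherianRing R] {𝔞 : Ideal R}

lemma extFinite_gammaSub {A : Type u} [AddCommGroup A] [Module R A]
    (h0 : ExtFinite (ModuleCat.of R (R ⧸ 𝔞)) 0 A) (h1 : ExtFinite (ModuleCat.of R (R ⧸ 𝔞)) 1 A) :
    ExtFinite (ModuleCat.of R (R ⧸ 𝔞)) 0 (gammaSub 𝔞 A) ∧
      ExtFinite (ModuleCat.of R (R ⧸ 𝔞)) 1 (gammaSub 𝔞 A) := by
  let Γ := gammaSub 𝔞 A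
  have ex : Function.Exact Γ.subtype Γ.mkQ := LinearMap.exact_subtype_mkQ _
  refine ⟨ExtFinite.left_zero Γ.injective_subtype h0,
    ExtFinite.left ex Γ.injective_subtype Γ.mkQ_surjective ?_ h1⟩
  rw [extFinite_zero_iff, eq_bot_iff.2
    ((torsionBySet_le_gammaSub 𝔞 _).trans (gammaSub_quotient_gammaSub 𝔞 A).le)]
  exact Submodule.fg_bot

lemma extFinite_lim (t : ℕ) {A : Type u} [AddCommGroup A] [Module R A]
    (hA : ∀ j, ExtFinite (ModuleCat.of R (R ⧸ 𝔞)) j A)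
    (hFD : ∀ i < t, ExtFinite (ModuleCat.of R (R ⧸ 𝔞)) 0 (Lim 𝔞 i (ModuleCat.of R A)) →
      MemFD R 1 (Lim 𝔞 i (ModuleCat.of R A))) :
    (∀ i < t, ∀ j, ExtFinite (ModuleCat.of R (R ⧸ 𝔞)) j (Lim 𝔞 i (ModuleCat.of R A))) ∧
      ExtFinite (ModuleCat.of R (R ⧸ 𝔞)) 0 (Lim 𝔞 t (ModuleCat.of R A)) ∧
      ExtFinite (ModuleCat.of R (R ⧸ 𝔞)) 1 (Lim 𝔞 t (ModuleCat.of R A)) := by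
  induction t generalizing A with
  | zero =>
    obtain ⟨h0, h1⟩ := extFinite_gammaSub (hA 0) (hA 1)
    exact ⟨fun i hi => absurd hi (Nat.not_lt_zero i), h0.of_equiv (limZeroEquiv A 𝔞).symm,
      h1.of_equiv (limZeroEquiv A 𝔞).symm⟩
  | succ t ih =>
    obtain ⟨h0, h1⟩ := extFinite_gammaSub (hA 0) (hA 1)
    have e0 := limZeroEquiv A 𝔞
    have hΓ := (MemFD.of_equiv e0
      (hFD 0 t.succ_pos (h0.of_equiv e0.symm))).extFinite (isTorsionIdeal_gammaSub 𝔞 A) h0 h1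
    let Γ := gammaSub 𝔞 A
    have ex : Function.Exact Γ.subtype Γ.mkQ := LinearMap.exact_subtype_mkQ _
    have hQ (j) : ExtFinite (ModuleCat.of R (R ⧸ 𝔞)) j (A ⧸ Γ) :=
      ExtFinite.right ex Γ.injective_subtype Γ.mkQ_surjective (hA j) (hΓ (j + 1))
    obtain ⟨L, hL, hL'⟩ := exists_dimension_shift 𝔞 (A ⧸ Γ) (gammaSub_quotient_gammaSub 𝔞 A)
    have e (i : ℕ) : Lim 𝔞 i L ≃ₗ[R] Lim 𝔞 (i + 1) (ModuleCat.of R A) :=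
      (hL i).some.trans (nonempty_lim_equiv_of_left 𝔞 i ex Γ.injective_subtype Γ.mkQ_surjective
        fun i z => lim_succ_eq_zero_of_isTorsionIdeal 𝔞 i (isTorsionIdeal_gammaSub 𝔞 A) z).some.symm
    obtain ⟨ih, ih0, ih1⟩ := ih (A := L) (fun j => hL' j (hQ (j + 1))) fun i hi h =>
      (hFD (i + 1) (Nat.succ_lt_succ hi) (h.of_equiv (e i))).of_equiv (e i).symm
    refine ⟨fun i hi j => ?_, ih0.of_equiv (e t), ih1.of_equiv (e t)⟩
    cases i with
    | zero => exact (hΓ j).of_equiv e0.symm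
    | succ i => exact (ih i (Nat.lt_of_succ_lt_succ hi) j).of_equiv (e i)

omit [IsNoetherianRing R] in
lemma isTorsionIdeal_obj (i : ℕ) (M : ModuleCat.{u} R) :
    IsTorsionIdeal 𝔞 ((localCohomology 𝔞 i).obj M) :=
  (isTorsionIdeal_lim 𝔞 i M).of_injective (equivLim 𝔞 i M).toLinearMap (equivLim 𝔞 i M).injective

end localCohomology

lemma extFinite_iff_finite_extIdeal {R : Type u} [CommRing R] {𝔞 : Ideal R} {i : ℕ}
    {M : ModuleCat.{u} R} :
    ExtFinite (ModuleCat.of R (R ⧸ 𝔞)) i M ↔ Module.Finite R (extIdeal 𝔞 i M) :=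
  (Module.Finite.equiv_iff (extObjEquiv (ModuleCat.of R (R ⧸ 𝔞)) M i)).symm

/-- Yang–Shen, Proposition 4.1(2) (module case): let `𝔞` be a proper ideal of a noetherian
ring `R`, `t ≥ 0`, and `M` an `R`-module with `Ext^i_R(R/𝔞, M)` finitely generated for all `i`.
If `H^i_𝔞(M) ∈ FD_{≤1}` for all `i < t` (in particular if `dim_R H^i_𝔞(M) ≤ 1` for all `i < t`,
or if `dim R = 2`), then `H^i_𝔞(M)` is `𝔞`-cofinite for all `i < t` and both
`Hom_R(R/𝔞, H^t_𝔞(M))` and `Ext^1_R(R/𝔞, H^t_𝔞(M))` are finitely generated. -/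
theorem localCohomology_isCofinite_of_memFD_one
    {R : Type u} [CommRing R] [IsNoetherianRing R] (𝔞 : Ideal R) (ha : 𝔞 ≠ ⊤) (t : ℕ)
    (M : ModuleCat.{u} R) (hext : ∀ i : ℕ, Module.Finite R (extIdeal 𝔞 i M))
    (h : (∀ i : ℕ, i < t → MemFD R 1 ((localCohomology 𝔞 i).obj M)) ∨
      (∀ i : ℕ, i < t → moduleDim R ((localCohomology 𝔞 i).obj M) ≤ 1) ∨
      ringKrullDim R = 2) :
    (∀ i : ℕ, i < t → IsCofinite 𝔞 ((localCohomology 𝔞 i).obj M)) ∧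
      Module.Finite R ((R ⧸ 𝔞) →ₗ[R] ((localCohomology 𝔞 t).obj M)) ∧
      Module.Finite R (extIdeal 𝔞 1 ((localCohomology 𝔞 t).obj M)) := by
  have hFD (i : ℕ) (hi : i < t) (h0 : ExtFinite (ModuleCat.of R (R ⧸ 𝔞)) 0
      (localCohomology.Lim 𝔞 i M)) : MemFD R 1 (localCohomology.Lim 𝔞 i M) := by
    rcases h with h | h | h
    · exact (h i hi).of_equiv (localCohomology.equivLim 𝔞 i M)
    · exact (MemFD.of_moduleDim_le (by exact_mod_cast h i hi)).of_equiv
        (localCohomology.equivLim 𝔞 i M)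
    · exact MemFD.of_ringKrullDim_le (by rw [h]; norm_num)
        (localCohomology.isTorsionIdeal_lim 𝔞 i M) ((extFinite_zero_iff 𝔞).1 h0)
  obtain ⟨hlt, h0, h1⟩ := localCohomology.extFinite_lim t (A := M)
    (fun j => extFinite_iff_finite_extIdeal.2 (hext j)) hFD
  refine ⟨fun i hi => ⟨(localCohomology.isTorsionIdeal_obj i M).support_subset_zeroLocus,
    fun j => extFinite_iff_finite_extIdeal.1
      ((hlt i hi j).of_equiv (localCohomology.equivLim 𝔞 i M).symm)⟩, ?_, ?_⟩
  · exact (finite_hom_iff 𝔞).2 ((extFinite_zero_iff 𝔞).1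
      (h0.of_equiv (localCohomology.equivLim 𝔞 t M).symm))
  · exact extFinite_iff_finite_extIdeal.1 (h1.of_equiv (localCohomology.equivLim 𝔞 t M).symm)
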